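/- Let n ≥ 2 and N ≥ 1. Fix x₀ ∈ ℝⁿ with |x₀| = 1 and a unit vector v₀ ∈ ℝⁿ with ⟪x₀, v₀⟫ = 0. Let W : ℝⁿ × ℝⁿ × ℝⁿ → Matrix (Fin N) (Fin N) ℂ be real-analytic and such that W(p, v, x) is an invertible matrix for all p, x ∈ ℝⁿ and all unit vectors v. Let f : ℝⁿ → ℂ^N be continuous with support contained in the closed unit ball {x ∈ ℝⁿ : |x| ≤ 1}. Suppose there exists δ > 0 such that for every unit vector v ∈ ℝⁿ with |v − v₀| < δ and every p ∈ ℝⁿ with ⟪p, v⟫ = 0 and |p − x₀| < δ one has ∫_ℝ W(p, v, p + t v) · f(p + t v) dt = 0. Then there exists ε > 0 such that f = 0 on the ball {x ∈ ℝⁿ : |x − x₀| < ε}. -/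

import Mathlib

open Matrix MeasureTheory
open scoped RealInnerProductSpace

attribute [local instance] Matrix.normedAddCommGroup Matrix.normedSpace

/-!
It suffices to work in the planes parallel to `x₀` and `v₀`, where the disc lies below the first
axis. Let `V p ξ` be the weight along lines of slope `ξ`, let `h` be the unknown function, and let
`g p = exp (m * p.2) • V p 0 (h p)`, cut off to `-δ ≤ p.2`. The integral of `V p ξ (h p)` against
an exponential that is constant along the lines of small slope `ξ` vanishes up to the contribution
of the cut, which is exponentially small. In the coordinates `X = (exp p.1 - 1, exp p.2 - 1)` this
says that `∫ G (X, i / m) ((1 + X) ^ i • g)` is exponentially small for all multi-indices `i` up to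
`K`, where `K / m` is a small constant and `G (X, t)` is the weight of slope `-t₀ / (1 + t₁)`
relative to that of slope zero.

If `G` were `1`, signed binomial combinations over `i` would give the moments `∫ X ^ α • g`. Since
`G` is analytic with `G (X, 0) = 1`, the other terms of its expansion carry factors `(i / m) ^ c`
with `c ≠ 0`. A factor `i ^ c` acts on `X ^ α` as the operator `((1 + X) d/dX) ^ c`, which costs at
most `(K (1 + 1 / r)) ^ c` and is absorbed by `m ^ c`. So the normalized moments are at most half of
their own supremum plus an error of size `2 ^ (-K)`, hence exponentially small. Letting `m → ∞`,
Mikusiński's argument for Laplace transforms shows that all moments of `V p 0 (h p)` near the top of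
the disc vanish, and `h` vanishes there by the Stone–Weierstrass theorem.
-/

open Filter Topology

section ExponentialMoments

variable {Ω F : Type*} [MeasurableSpace Ω] {μ : Measure Ω} [NormedAddCommGroup F]
  [NormedSpace ℝ F] {φ : Ω → F} {Y : Ω → ℝ} {B C ε a : ℝ}

lemma norm_smul_le_of_abs_le {c : ℝ} {x : F} (hc : x ≠ 0 → |c| ≤ B) : ‖c • x‖ ≤ B * ‖x‖ := by
  rcases eq_or_ne x 0 with rfl | hx
  · simp
  · rw [norm_smul, Real.norm_eq_abs]
    gcongr
    exact hc hx

lemma integrable_smul_of_abs_le {c : Ω → ℝ} (hφ : Integrable φ μ) (hc : Measurable c)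
    (hB : ∀ ω, φ ω ≠ 0 → |c ω| ≤ B) : Integrable (fun ω ↦ c ω • φ ω) μ :=
  (hφ.norm.const_mul B).mono' (hc.aestronglyMeasurable.smul hφ.1)
    (.of_forall fun ω ↦ norm_smul_le_of_abs_le (hB ω))

lemma norm_integral_smul_le {c : Ω → ℝ} (hφ : Integrable φ μ)
    (hB : ∀ ω, φ ω ≠ 0 → |c ω| ≤ B) : ‖∫ ω, c ω • φ ω ∂μ‖ ≤ B * ∫ ω, ‖φ ω‖ ∂μ := by
  rw [← integral_const_mul]
  exact norm_integral_le_of_norm_le (hφ.norm.const_mul B)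
    (.of_forall fun ω ↦ norm_smul_le_of_abs_le (hB ω))

lemma hasSum_real_exp (x : ℝ) : HasSum (fun k : ℕ ↦ (k.factorial : ℝ)⁻¹ * x ^ k) (Real.exp x) := by
  simpa [Real.exp_eq_exp_ℝ, div_eq_inv_mul] using NormedSpace.expSeries_div_hasSum_exp x

lemma hasSum_integral_pow_smul {Z : Ω → ℝ} (hφ : Integrable φ μ) (hZ : Measurable Z)
    (hB : ∀ ω, φ ω ≠ 0 → |Z ω| ≤ B) :
    HasSum (fun k : ℕ ↦ (k.factorial : ℝ)⁻¹ • ∫ ω, Z ω ^ k • φ ω ∂μ)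
      (∫ ω, Real.exp (Z ω) • φ ω ∂μ) := by
  have hpow (k : ℕ) (ω : Ω) (hω : φ ω ≠ 0) :
      |(k.factorial : ℝ)⁻¹ * Z ω ^ k| ≤ (k.factorial : ℝ)⁻¹ * B ^ k := by
    rw [abs_mul, abs_pow, abs_of_nonneg (by positivity)]
    gcongr
    exact hB ω hω
  have hint (k : ℕ) : Integrable (fun ω ↦ ((k.factorial : ℝ)⁻¹ * Z ω ^ k) • φ ω) μ :=
    integrable_smul_of_abs_le hφ (by fun_prop) (hpow k)
  have hle (k : ℕ) : ∫ ω, ‖((k.factorial : ℝ)⁻¹ * Z ω ^ k) • φ ω‖ ∂μ ≤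
      (k.factorial : ℝ)⁻¹ * B ^ k * ∫ ω, ‖φ ω‖ ∂μ := by
    rw [← integral_const_mul]
    exact integral_mono (hint k).norm (hφ.norm.const_mul _)
      fun ω ↦ norm_smul_le_of_abs_le (hpow k ω)
  have hsum := hasSum_integral_of_summable_integral_norm hint <|
    .of_nonneg_of_le (fun k ↦ by positivity) hle ((hasSum_real_exp B).summable.mul_right _)
  simp only [((hasSum_real_exp _).smul_const _).tsum_eq] at hsum
  simpa only [mul_smul, integral_smul] using hsum

lemma norm_integral_exp_neg_mul_exp_sub_le (hφ : Integrable φ μ) (hY : Measurable Y)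
    (hB : ∀ ω, φ ω ≠ 0 → Y ω ≤ B)
    (hC : ∀ k : ℕ, 1 ≤ k → ‖∫ ω, Real.exp (k * Y ω) • φ ω ∂μ‖ ≤ C * Real.exp (-(k * ε)))
    {c : ℝ} (hc : 0 ≤ c) {n : ℕ} (hn : 1 ≤ n) :
    ‖∫ ω, Real.exp (-(c * Real.exp (n * Y ω))) • φ ω ∂μ - ∫ ω, φ ω ∂μ‖ ≤
      C * (Real.exp (c * Real.exp (-(n * ε))) - 1) := by
  have hsum := hasSum_integral_pow_smul (B := c * Real.exp (n * B)) hφ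
    (Z := fun ω ↦ -(c * Real.exp (n * Y ω))) (by fun_prop) fun ω hω ↦ by
      rw [abs_neg, abs_of_nonneg (by positivity)]
      gcongr
      exact hB ω hω
  have htail := (hasSum_nat_add_iff' 1).2 hsum
  have hexp := ((hasSum_nat_add_iff' 1).2 (hasSum_real_exp (c * Real.exp (-(n * ε))))).mul_left C
  simp only [Finset.sum_range_one, pow_zero, one_smul, Nat.factorial_zero, Nat.cast_one, inv_one,
    mul_one] at htail hexp
  rw [← htail.tsum_eq]
  refine tsum_of_norm_bounded hexp fun k ↦ ?_
  have hterm (ω : Ω) : (-(c * Real.exp (n * Y ω))) ^ (k + 1) • φ ω =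
      (-c) ^ (k + 1) • Real.exp (((k + 1) * n : ℕ) * Y ω) • φ ω := by
    rw [smul_smul, ← neg_mul, mul_pow, ← Real.exp_nat_mul]
    push_cast
    ring_nf
  calc ‖((k + 1).factorial : ℝ)⁻¹ • ∫ ω, (-(c * Real.exp (n * Y ω))) ^ (k + 1) • φ ω ∂μ‖
      = ((k + 1).factorial : ℝ)⁻¹ *
          (c ^ (k + 1) * ‖∫ ω, Real.exp (((k + 1) * n : ℕ) * Y ω) • φ ω ∂μ‖) := by
        simp only [hterm, integral_smul, norm_smul, norm_pow, norm_neg, norm_inv,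
          Real.norm_of_nonneg hc, Real.norm_natCast]
    _ ≤ ((k + 1).factorial : ℝ)⁻¹ * (c ^ (k + 1) * (C * Real.exp (-(((k + 1) * n : ℕ) * ε)))) := by
        gcongr
        exact hC _ (Nat.mul_pos k.succ_pos hn)
    _ = C * (((k + 1).factorial : ℝ)⁻¹ * (c * Real.exp (-(n * ε))) ^ (k + 1)) := by
        rw [mul_pow, ← Real.exp_nat_mul]
        push_cast
        ring_nf

lemma tendsto_natCast_mul_exp_of_neg {s : ℝ} (hs : s < 0) :
    Tendsto (fun n : ℕ ↦ n * Real.exp (n * s)) atTop (𝓝 0) := by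
  simp only [Real.exp_nat_mul]
  exact tendsto_self_mul_const_pow_of_lt_one (Real.exp_pos s).le (Real.exp_lt_one_iff.2 hs)

-- The factor `n` in front of the inner exponential sends the kernel to `0` also on `{Y = a}`.
lemma tendsto_integral_exp_neg_mul_exp (hφ : Integrable φ μ) (hY : Measurable Y) (a : ℝ) :
    Tendsto (fun n : ℕ ↦ ∫ ω, Real.exp (-(n * Real.exp (n * (Y ω - a)))) • φ ω ∂μ) atTop
      (𝓝 (∫ ω in {ω | Y ω < a}, φ ω ∂μ)) := by
  rw [← integral_indicator (measurableSet_lt hY measurable_const)]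
  refine tendsto_integral_of_dominated_convergence (fun ω ↦ ‖φ ω‖)
    (fun n ↦ (by fun_prop : Measurable _).aestronglyMeasurable.smul hφ.1) hφ.norm
    (fun n ↦ .of_forall fun ω ↦ ?_) (.of_forall fun ω ↦ ?_)
  · rw [norm_smul, Real.norm_of_nonneg (Real.exp_pos _).le]
    exact mul_le_of_le_one_left (norm_nonneg _)
      (Real.exp_le_one_iff.2 (neg_nonpos.2 (by positivity)))
  · rcases lt_or_ge (Y ω) a with hω | hω
    · rw [Set.indicator_of_mem (by exact hω)]
      simpa using ((Real.continuous_exp.tendsto _).comp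
        (tendsto_natCast_mul_exp_of_neg (sub_neg.2 hω)).neg).smul_const (φ ω)
    · rw [Set.indicator_of_notMem (by exact hω.not_gt), ← zero_smul ℝ (φ ω)]
      refine Tendsto.smul_const (Real.tendsto_exp_neg_atTop_nhds_zero.comp ?_) _
      refine tendsto_atTop_mono (fun n ↦ ?_) tendsto_natCast_atTop_atTop
      exact le_mul_of_one_le_right n.cast_nonneg
        (Real.one_le_exp (mul_nonneg n.cast_nonneg (sub_nonneg.2 hω)))

theorem setIntegral_eq_zero_of_norm_integral_exp_le (hφ : Integrable φ μ) (hY : Measurable Y)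
    (hB : ∀ ω, φ ω ≠ 0 → Y ω ≤ B)
    (hC : ∀ k : ℕ, 1 ≤ k → ‖∫ ω, Real.exp (k * Y ω) • φ ω ∂μ‖ ≤ C * Real.exp (-(k * ε)))
    (ha : -ε < a) : ∫ ω in {ω | a ≤ Y ω}, φ ω ∂μ = 0 := by
  have hshift (n : ℕ) (ω : Ω) : (n : ℝ) * Real.exp (n * (Y ω - a)) =
      n * Real.exp (n * -a) * Real.exp (n * Y ω) := by
    rw [mul_assoc, ← Real.exp_add]
    ring_nf
  have hbound (n : ℕ) (hn : 1 ≤ n) :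
      ‖∫ ω, Real.exp (-(n * Real.exp (n * (Y ω - a)))) • φ ω ∂μ - ∫ ω, φ ω ∂μ‖ ≤
        C * (Real.exp (n * Real.exp (n * (-ε - a))) - 1) := by
    have := norm_integral_exp_neg_mul_exp_sub_le (c := n * Real.exp (n * -a)) hφ hY hB hC
      (by positivity) hn
    simp only [hshift]
    rwa [mul_assoc, ← Real.exp_add, ← mul_neg, ← mul_add, neg_add_eq_sub] at this
  have hlim : Tendsto (fun n : ℕ ↦ C * (Real.exp (n * Real.exp (n * (-ε - a))) - 1))
      atTop (𝓝 0) := by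
    simpa using (((Real.continuous_exp.tendsto _).comp
      (tendsto_natCast_mul_exp_of_neg (sub_neg.2 ha))).sub_const 1).const_mul C
  have hfull : Tendsto (fun n : ℕ ↦ ∫ ω, Real.exp (-(n * Real.exp (n * (Y ω - a)))) • φ ω ∂μ)
      atTop (𝓝 (∫ ω, φ ω ∂μ)) :=
    tendsto_iff_norm_sub_tendsto_zero.2 <| squeeze_zero' (.of_forall fun _ ↦ norm_nonneg _)
      ((eventually_ge_atTop 1).mono hbound) hlim
  have heq := tendsto_nhds_unique (tendsto_integral_exp_neg_mul_exp hφ hY a) hfull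
  rw [← integral_add_compl (measurableSet_lt hY (measurable_const (a := a))) hφ,
    left_eq_add] at heq
  simpa only [Set.compl_ofPred, not_lt] using heq

end ExponentialMoments

section MonomialExpansions

variable {τ : Type*} [Fintype τ]

/-- The monomial `x ^ α = ∏ j, x j ^ α j` with multi-exponent `α`. -/
def multiPow (x : τ → ℝ) (α : τ → ℕ) : ℝ :=
  ∏ j, x j ^ α j

lemma multiPow_add (x : τ → ℝ) (α β : τ → ℕ) :
    multiPow x (α + β) = multiPow x α * multiPow x β := by
  simp only [multiPow, Pi.add_apply, pow_add, Finset.prod_mul_distrib]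

lemma multiPow_const (r : ℝ) (α : τ → ℕ) : multiPow (fun _ ↦ r) α = r ^ ∑ j, α j :=
  Finset.prod_pow_eq_pow_sum _ _ _

lemma multiPow_div (x : τ → ℝ) (m : ℝ) (α : τ → ℕ) :
    multiPow (fun j ↦ x j / m) α = multiPow x α / m ^ ∑ j, α j := by
  simp only [multiPow, div_pow, Finset.prod_div_distrib, Finset.prod_pow_eq_pow_sum]

lemma multiPow_zero_right (x : τ → ℝ) : multiPow x 0 = 1 := by
  simp [multiPow]

lemma multiPow_zero_left {α : τ → ℕ} (hα : α ≠ 0) : multiPow (0 : τ → ℝ) α = 0 := by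
  obtain ⟨j, hj⟩ := Function.ne_iff.1 hα
  exact Finset.prod_eq_zero (Finset.mem_univ j) (zero_pow hj)

lemma multiPow_sumElim {σ : Type*} [Fintype σ] (x : σ → ℝ) (t : τ → ℝ) (α : σ ⊕ τ → ℕ) :
    multiPow (Sum.elim x t) α = multiPow x (α ∘ Sum.inl) * multiPow t (α ∘ Sum.inr) :=
  Fintype.prod_sum_type _

lemma abs_multiPow_le {x y : τ → ℝ} (h : ∀ j, |x j| ≤ y j) (α : τ → ℕ) :
    |multiPow x α| ≤ multiPow y α := by
  simp only [multiPow, Finset.abs_prod, abs_pow]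
  gcongr with j
  exact h j

lemma abs_multiPow_le_pow {x : τ → ℝ} {r : ℝ} (h : ∀ j, |x j| ≤ r) (α : τ → ℕ) :
    |multiPow x α| ≤ r ^ ∑ j, α j :=
  (abs_multiPow_le h α).trans_eq (multiPow_const r α)

@[fun_prop]
lemma continuous_multiPow (α : τ → ℕ) : Continuous fun x : τ → ℝ ↦ multiPow x α := by
  unfold multiPow
  fun_prop

variable {ι σ A E : Type*} [Fintype σ] [NormedAddCommGroup A] [NormedSpace ℝ A]
  [NormedAddCommGroup E]

/-- `G` has the monomial expansion `G z = ∑ k, z ^ e k • u k` on the closed polydisc of radius `r`,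
with majorant sum at most `C`. Exponents may repeat, so that a power series in non-commuting letters
need not be collected. -/
structure HasMonomialExpansion (e : ι → σ → ℕ) (u : ι → A) (r C : ℝ) (G : (σ → ℝ) → A) :
    Prop where
  summable : Summable fun k ↦ ‖u k‖ * r ^ ∑ j, e k j
  tsum_le : ∑' k, ‖u k‖ * r ^ ∑ j, e k j ≤ C
  hasSum : ∀ z, (∀ j, |z j| ≤ r) → HasSum (fun k ↦ multiPow z (e k) • u k) (G z)

lemma HasMonomialExpansion.mono {e : ι → σ → ℕ} {u : ι → A} {r s C : ℝ} {G : (σ → ℝ) → A}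
    (h : HasMonomialExpansion e u r C G) (hs : 0 ≤ s) (hsr : s ≤ r) :
    HasMonomialExpansion e u s C G := by
  have hle (k : ι) : ‖u k‖ * s ^ ∑ j, e k j ≤ ‖u k‖ * r ^ ∑ j, e k j := by gcongr
  have hsum : Summable fun k ↦ ‖u k‖ * s ^ ∑ j, e k j :=
    .of_nonneg_of_le (fun k ↦ by positivity) hle h.summable
  exact ⟨hsum, (hsum.tsum_le_tsum hle h.summable).trans h.tsum_le,
    fun z hz ↦ h.hasSum z fun j ↦ (hz j).trans hsr⟩

/-- The words over the alphabet `Option σ`; `none` is a letter standing for a parameter. -/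
abbrev OptionWord (σ : Type*) := Σ n : ℕ, Fin n → Option σ

/-- The number of occurrences in a word of each letter of `σ`. -/
noncomputable def OptionWord.letterCount (s : OptionWord σ) (j : σ) : ℕ :=
  open Classical in (Finset.univ.filter fun i ↦ s.2 i = some j).card

lemma OptionWord.prod_elim_eq_multiPow (s : OptionWord σ) (z : σ → ℝ) :
    ∏ i, (s.2 i).elim 1 z = multiPow z s.letterCount := by
  classical
  rw [← Finset.prod_fiberwise' Finset.univ s.2 fun o ↦ o.elim 1 z]
  simp [Fintype.prod_option, multiPow, letterCount]

/-- The direction in `(σ → ℝ) × E` substituted for a letter when a power series is expanded in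
the coordinates of its first argument, its second argument being frozen at `w`. -/
noncomputable def letterVector (w : E) (o : Option σ) : (σ → ℝ) × E :=
  open Classical in o.elim (0, w) fun j ↦ (Pi.single j 1, 0)

lemma norm_letterVector_le {w : E} {r : ℝ} (hw : ‖w‖ ≤ r) (o : Option σ) :
    ‖letterVector w o‖ ≤ o.elim r fun _ ↦ 1 := by
  cases o <;> simp [letterVector, Prod.norm_def, Pi.norm_single, hw]

variable [NormedSpace ℝ E]

lemma sum_elim_smul_letterVector (z : σ → ℝ) (w : E) :
    ∑ o : Option σ, o.elim 1 z • letterVector w o = (z, w) := by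
  classical
  simp only [Fintype.sum_option, letterVector, Option.elim, one_smul]
  ext j
  · simp [Prod.fst_sum, Finset.sum_apply, Pi.single_apply]
  · simp [Prod.snd_sum]

variable (p : FormalMultilinearSeries ℝ ((σ → ℝ) × E) A)

/-- The coefficient of the word `s` in the expansion of a power series in `letterVector w`. -/
noncomputable def wordCoeff (w : E) (s : OptionWord σ) : A :=
  p s.1 fun i ↦ letterVector w (s.2 i)

lemma norm_wordCoeff_mul_pow_le {w : E} {r : ℝ} (hw : ‖w‖ ≤ r) (s : OptionWord σ) :
    ‖wordCoeff p w s‖ * r ^ ∑ j, s.letterCount j ≤ ‖p s.1‖ * r ^ s.1 := by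
  have hr : 0 ≤ r := (norm_nonneg w).trans hw
  have hcoeff : ‖wordCoeff p w s‖ ≤ ‖p s.1‖ * ∏ i, (s.2 i).elim r fun _ ↦ 1 :=
    ((p s.1).le_opNorm _).trans <| by
      gcongr with i
      exact norm_letterVector_le hw (s.2 i)
  have hmul (o : Option σ) : (o.elim r fun _ ↦ 1) * (o.elim 1 fun _ ↦ r) = r := by
    cases o <;> simp
  calc ‖wordCoeff p w s‖ * r ^ ∑ j, s.letterCount j
      ≤ ‖p s.1‖ * (∏ i, (s.2 i).elim r fun _ ↦ 1) * ∏ i, (s.2 i).elim 1 fun _ ↦ r := by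
        rw [s.prod_elim_eq_multiPow, multiPow_const]
        gcongr
    _ = ‖p s.1‖ * r ^ s.1 := by
        simp [mul_assoc, ← Finset.prod_mul_distrib, hmul]

lemma hasSum_wordMajorant {r : ℝ} (hr : 0 ≤ r)
    (h : Summable fun n ↦ ‖p n‖ * ((Fintype.card σ + 1) * r) ^ n) :
    HasSum (fun s : OptionWord σ ↦ ‖p s.1‖ * r ^ s.1)
      (∑' n, ‖p n‖ * ((Fintype.card σ + 1) * r) ^ n) := by
  have hfiber (n : ℕ) : HasSum (fun _ : Fin n → Option σ ↦ ‖p n‖ * r ^ n)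
      (‖p n‖ * ((Fintype.card σ + 1) * r) ^ n) := by
    convert hasSum_fintype fun _ : Fin n → Option σ ↦ ‖p n‖ * r ^ n using 1
    simp [mul_pow]
    ring
  refine h.hasSum.sigma_of_hasSum hfiber ((summable_sigma_of_nonneg fun s ↦ by positivity).2 ?_)
  exact ⟨fun n ↦ (hfiber n).summable, by simpa only [(hfiber _).tsum_eq] using h⟩

lemma multiPow_smul_wordCoeff (z : σ → ℝ) (w : E) (s : OptionWord σ) :
    multiPow z s.letterCount • wordCoeff p w s =
      p s.1 fun i ↦ (s.2 i).elim 1 z • letterVector w (s.2 i) := by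
  rw [ContinuousMultilinearMap.map_smul_univ, s.prod_elim_eq_multiPow, wordCoeff]

lemma hasSum_wordCoeff {z : σ → ℝ} {w : E} {a : A}
    (hp : HasSum (fun n ↦ p n fun _ ↦ (z, w)) a)
    (hs : Summable fun s ↦ multiPow z s.letterCount • wordCoeff p w s) :
    HasSum (fun s ↦ multiPow z s.letterCount • wordCoeff p w s) a := by
  refine hp.sigma_of_hasSum (fun n ↦ ?_) hs
  simp only [multiPow_smul_wordCoeff]
  convert hasSum_fintype fun s : Fin n → Option σ ↦
    p n fun i ↦ (s i).elim 1 z • letterVector w (s i) using 1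
  rw [← sum_elim_smul_letterVector]
  exact (p n).map_sum fun _ o ↦ o.elim 1 z • letterVector w o

theorem exists_hasMonomialExpansion_of_analyticAt [CompleteSpace A] {U : (σ → ℝ) × E → A}
    (hU : AnalyticAt ℝ U 0) :
    ∃ r > 0, ∃ C, ∀ w : E, ‖w‖ ≤ r → ∃ u : OptionWord σ → A,
      HasMonomialExpansion OptionWord.letterCount u r C fun z ↦ U (z, w) := by
  obtain ⟨p, R, hp⟩ := hU
  obtain ⟨ρ, hρ, hρR⟩ := ENNReal.lt_iff_exists_nnreal_btwn.1 hp.r_pos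
  have hρ : (0 : ℝ) < ρ := by exact_mod_cast hρ
  set r : ℝ := ρ / (Fintype.card σ + 1)
  have hr0 : 0 < r := by positivity
  have hrρ : r ≤ ρ := div_le_self hρ.le (by simp)
  have hmul : (Fintype.card σ + 1) * r = ρ := mul_div_cancel₀ _ (by positivity)
  have hmaj := hasSum_wordMajorant p hr0.le
    (hmul ▸ p.summable_norm_mul_pow (hρR.trans_le hp.r_le))
  refine ⟨r, hr0, ∑' n, ‖p n‖ * ((Fintype.card σ + 1) * r) ^ n, fun w hw ↦ ⟨wordCoeff p w, ?_⟩⟩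
  have hsum : Summable fun s ↦ ‖wordCoeff p w s‖ * r ^ ∑ j, s.letterCount j :=
    .of_nonneg_of_le (fun _ ↦ by positivity) (norm_wordCoeff_mul_pow_le p hw) hmaj.summable
  refine ⟨hsum, (hsum.tsum_le_tsum (norm_wordCoeff_mul_pow_le p hw) hmaj.summable).trans_eq
    hmaj.tsum_eq, fun z hz ↦ hasSum_wordCoeff p ?_ ?_⟩
  · have hnorm : ‖(z, w)‖₊ ≤ ρ :=
      max_le ((pi_norm_le_iff_of_nonneg hρ.le).2 fun j ↦ (hz j).trans hrρ) (hw.trans hrρ)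
    have hmem : (z, w) ∈ Metric.eball 0 R :=
      mem_eball_zero_iff.2 ((ENNReal.coe_le_coe.2 hnorm).trans_lt hρR)
    simpa only [zero_add] using hp.hasSum hmem
  · refine .of_norm_bounded hsum fun s ↦ ?_
    rw [norm_smul, mul_comm]
    gcongr
    exact abs_multiPow_le_pow hz _

end MonomialExpansions

section ShiftedEuler

open Polynomial

/-- The norm `∑ n, |p.coeff n| * r ^ n` of a real polynomial. -/
noncomputable def weightedCoeffNorm (r : ℝ) (p : ℝ[X]) : ℝ :=
  p.sum fun n c ↦ |c| * r ^ n

lemma weightedCoeffNorm_eq_sum_support (r : ℝ) (p : ℝ[X]) :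
    weightedCoeffNorm r p = ∑ n ∈ p.support, |p.coeff n| * r ^ n :=
  rfl

lemma weightedCoeffNorm_eq_sum_of_support_subset (r : ℝ) {p : ℝ[X]} {s : Finset ℕ}
    (h : p.support ⊆ s) : weightedCoeffNorm r p = ∑ n ∈ s, |p.coeff n| * r ^ n :=
  sum_eq_of_subset _ (by simp) h

lemma weightedCoeffNorm_monomial (r : ℝ) (n : ℕ) (c : ℝ) :
    weightedCoeffNorm r (monomial n c) = |c| * r ^ n :=
  sum_monomial_index _ _ (by simp)

variable {r : ℝ}

lemma weightedCoeffNorm_nonneg (hr : 0 ≤ r) (p : ℝ[X]) : 0 ≤ weightedCoeffNorm r p :=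
  Finset.sum_nonneg fun _ _ ↦ by positivity

lemma weightedCoeffNorm_add_le (hr : 0 ≤ r) (p q : ℝ[X]) :
    weightedCoeffNorm r (p + q) ≤ weightedCoeffNorm r p + weightedCoeffNorm r q := by
  rw [weightedCoeffNorm_eq_sum_of_support_subset r support_add,
    weightedCoeffNorm_eq_sum_of_support_subset r (Finset.subset_union_left (s₂ := q.support)),
    weightedCoeffNorm_eq_sum_of_support_subset r (Finset.subset_union_right (s₁ := p.support)),
    ← Finset.sum_add_distrib]
  gcongr with n
  rw [coeff_add, ← add_mul]
  gcongr
  exact abs_add_le _ _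

lemma weightedCoeffNorm_sum_le (hr : 0 ≤ r) {ι : Type*} (s : Finset ι) (p : ι → ℝ[X]) :
    weightedCoeffNorm r (∑ i ∈ s, p i) ≤ ∑ i ∈ s, weightedCoeffNorm r (p i) :=
  Finset.le_sum_of_subadditive (weightedCoeffNorm r) (sum_zero_index _).le
    (weightedCoeffNorm_add_le hr) s p

/-- The operator `(1 + X) d/dX`, the Euler operator centred at `-1`. -/
noncomputable def shiftedEuler : Module.End ℝ ℝ[X] :=
  LinearMap.mulLeft ℝ (1 + X) ∘ₗ derivative

lemma shiftedEuler_apply (p : ℝ[X]) : shiftedEuler p = (1 + X) * derivative p :=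
  rfl

lemma shiftedEuler_pow_one_add_X_pow (c i : ℕ) :
    (shiftedEuler ^ c) ((1 + X) ^ i) = (i : ℝ) ^ c • (1 + X) ^ i := by
  have heigen : shiftedEuler ((1 + X) ^ i) = (i : ℝ) • (1 + X) ^ i := by
    rcases i with _ | i
    · simp [shiftedEuler_apply]
    · simp only [shiftedEuler_apply, derivative_pow, derivative_add, derivative_one, derivative_X,
        Nat.add_sub_cancel, smul_eq_C_mul]
      ring
  induction c with
  | zero => simp
  | succ c ih => rw [pow_succ', Module.End.mul_apply, ih, map_smul, heigen, smul_smul, pow_succ]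

lemma shiftedEuler_monomial (n : ℕ) (c : ℝ) :
    shiftedEuler (monomial n c) = monomial n (c * n) + monomial (n - 1) (c * n) := by
  rcases n with _ | n
  · simp [shiftedEuler_apply]
  · simp [shiftedEuler_apply, add_mul, X_mul_monomial, add_comm]

lemma natDegree_shiftedEuler_le {p : ℝ[X]} {K : ℕ} (hp : p.natDegree ≤ K) :
    (shiftedEuler p).natDegree ≤ K := by
  rw [p.as_sum_support, map_sum]
  refine natDegree_sum_le_of_forall_le _ _ fun n hn ↦ ?_
  have hn : n ≤ K := (le_natDegree_of_mem_supp n hn).trans hp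
  rw [shiftedEuler_monomial]
  exact natDegree_add_le_of_degree_le ((natDegree_monomial_le _).trans hn)
    ((natDegree_monomial_le _).trans (n.sub_le 1 |>.trans hn))

lemma weightedCoeffNorm_shiftedEuler_monomial_le (hr : 0 < r) (n : ℕ) (c : ℝ) :
    weightedCoeffNorm r (shiftedEuler (monomial n c)) ≤ n * (1 + 1 / r) * (|c| * r ^ n) := by
  rcases n with _ | n
  · simp [shiftedEuler_apply, weightedCoeffNorm]
  · rw [shiftedEuler_monomial]
    refine (weightedCoeffNorm_add_le hr.le _ _).trans_eq ?_
    simp only [weightedCoeffNorm_monomial, abs_mul, Nat.abs_cast, Nat.add_sub_cancel]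
    field_simp
    ring

lemma weightedCoeffNorm_shiftedEuler_le (hr : 0 < r) {p : ℝ[X]} {K : ℕ} (hp : p.natDegree ≤ K) :
    weightedCoeffNorm r (shiftedEuler p) ≤ K * (1 + 1 / r) * weightedCoeffNorm r p := by
  calc weightedCoeffNorm r (shiftedEuler p)
      ≤ ∑ n ∈ p.support, weightedCoeffNorm r (shiftedEuler (monomial n (p.coeff n))) := by
        conv_lhs => rw [p.as_sum_support, map_sum]
        exact weightedCoeffNorm_sum_le hr.le _ _
    _ ≤ ∑ n ∈ p.support, K * (1 + 1 / r) * (|p.coeff n| * r ^ n) := by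
        refine Finset.sum_le_sum fun n hn ↦ ?_
        refine (weightedCoeffNorm_shiftedEuler_monomial_le hr n _).trans ?_
        gcongr
        exact (le_natDegree_of_mem_supp n hn).trans hp
    _ = K * (1 + 1 / r) * weightedCoeffNorm r p := by
        rw [← Finset.mul_sum, weightedCoeffNorm_eq_sum_support]

lemma weightedCoeffNorm_shiftedEuler_pow_X_pow_le (hr : 0 < r) {α K : ℕ} (hα : α ≤ K) (c : ℕ) :
    weightedCoeffNorm r ((shiftedEuler ^ c) (X ^ α)) ≤ (K * (1 + 1 / r)) ^ c * r ^ α := by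
  have hdeg (c : ℕ) : ((shiftedEuler ^ c) (X ^ α)).natDegree ≤ K := by
    induction c with
    | zero => simpa using hα
    | succ c ih => rw [pow_succ', Module.End.mul_apply]; exact natDegree_shiftedEuler_le ih
  induction c with
  | zero => simp [← monomial_one_right_eq_X_pow, weightedCoeffNorm_monomial]
  | succ c ih =>
    rw [pow_succ', Module.End.mul_apply, pow_succ', mul_assoc]
    refine (weightedCoeffNorm_shiftedEuler_le hr (hdeg c)).trans ?_
    gcongr

/-- The coefficients of `X ^ α` in powers of `1 + X`. -/
def signedChoose (α i : ℕ) : ℝ :=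
  (-1) ^ (α - i) * α.choose i

lemma X_pow_eq_sum_signedChoose (α : ℕ) :
    (X : ℝ[X]) ^ α = ∑ i ∈ Finset.range (α + 1), signedChoose α i • (1 + X) ^ i := by
  conv_lhs => rw [← add_neg_cancel_left 1 X, ← add_assoc, add_right_comm, add_pow]
  refine Finset.sum_congr rfl fun i _ ↦ ?_
  simp only [signedChoose, smul_eq_C_mul, map_mul, map_pow, map_neg, map_one, map_natCast]
  ring

lemma sum_abs_signedChoose (α : ℕ) : ∑ i ∈ Finset.range (α + 1), |signedChoose α i| = 2 ^ α := by
  simp only [signedChoose, abs_mul, abs_pow, abs_neg, abs_one, one_pow, one_mul, Nat.abs_cast]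
  exact_mod_cast Nat.sum_range_choose α

lemma sum_signedChoose_mul_pow (α c : ℕ) (x : ℝ) :
    ∑ i ∈ Finset.range (α + 1), signedChoose α i * (i : ℝ) ^ c * (1 + x) ^ i =
      ((shiftedEuler ^ c) (X ^ α)).eval x := by
  rw [X_pow_eq_sum_signedChoose, map_sum, eval_finsetSum]
  refine Finset.sum_congr rfl fun i _ ↦ ?_
  simp [shiftedEuler_pow_one_add_X_pow, mul_assoc]

end ShiftedEuler

section MomentContraction

variable {Ω τ ι F : Type*} [MeasurableSpace Ω] {μ : Measure Ω} [Fintype τ] [Countable ι]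
  [NormedAddCommGroup F] [NormedSpace ℝ F] {X : Ω → τ → ℝ} {g : Ω → F} {r C η m Λ : ℝ} {K : ℕ}

/-- The moment `∫ X ^ α • g` of a vector-valued density `g` in the coordinates `X`. -/
noncomputable def vectorMoment (μ : Measure Ω) (X : Ω → τ → ℝ) (g : Ω → F) (α : τ → ℕ) : F :=
  ∫ ω, multiPow (X ω) α • g ω ∂μ

lemma integrable_multiPow_smul (hX : Measurable X) (hg : Integrable g μ)
    (hXr : ∀ ω, g ω ≠ 0 → ∀ j, |X ω j| ≤ r) (α : τ → ℕ) :
    Integrable (fun ω ↦ multiPow (X ω) α • g ω) μ :=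
  integrable_smul_of_abs_le hg (by fun_prop) fun ω hω ↦ abs_multiPow_le_pow (hXr ω hω) α

lemma norm_vectorMoment_le (hg : Integrable g μ) (hXr : ∀ ω, g ω ≠ 0 → ∀ j, |X ω j| ≤ r)
    (α : τ → ℕ) : ‖vectorMoment μ X g α‖ ≤ r ^ (∑ j, α j) * ∫ ω, ‖g ω‖ ∂μ :=
  norm_integral_smul_le hg fun ω hω ↦ abs_multiPow_le_pow (hXr ω hω) α

lemma norm_vectorMoment_le_of_le_sum (hg : Integrable g μ) (hr : 0 ≤ r)
    (hXr : ∀ ω, g ω ≠ 0 → ∀ j, |X ω j| ≤ r / 2) {α : τ → ℕ} (hα : K ≤ ∑ j, α j) :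
    ‖vectorMoment μ X g α‖ ≤ (1 / 2) ^ K * (∫ ω, ‖g ω‖ ∂μ) * r ^ ∑ j, α j :=
  calc ‖vectorMoment μ X g α‖ ≤ (r / 2) ^ (∑ j, α j) * ∫ ω, ‖g ω‖ ∂μ :=
        norm_vectorMoment_le hg hXr α
    _ = (1 / 2) ^ (∑ j, α j) * ((∫ ω, ‖g ω‖ ∂μ) * r ^ ∑ j, α j) := by
        rw [div_eq_mul_one_div, mul_pow]
        ring
    _ ≤ (1 / 2) ^ K * ((∫ ω, ‖g ω‖ ∂μ) * r ^ ∑ j, α j) := by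
        gcongr ?_ * _
        exact pow_le_pow_of_le_one (by norm_num) (by norm_num) hα
    _ = _ := (mul_assoc _ _ _).symm

section Polynomial

open Polynomial

lemma norm_integral_multiPow_mul_prod_eval_le (hX : Measurable X) (hg : Integrable g μ)
    (hXr : ∀ ω, g ω ≠ 0 → ∀ j, |X ω j| ≤ r)
    (hΛ : ∀ α, ‖vectorMoment μ X g α‖ ≤ Λ * r ^ ∑ j, α j) (a : τ → ℕ) (P : τ → ℝ[X]) :
    ‖∫ ω, (multiPow (X ω) a * ∏ j, (P j).eval (X ω j)) • g ω ∂μ‖ ≤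
      Λ * r ^ (∑ j, a j) * ∏ j, weightedCoeffNorm r (P j) := by
  classical
  have hexpand (x : τ → ℝ) : multiPow x a * ∏ j, (P j).eval (x j) =
      ∑ n ∈ Fintype.piFinset fun j ↦ (P j).support,
        (∏ j, (P j).coeff (n j)) * multiPow x (a + n) := by
    simp only [eval_eq_sum, Polynomial.sum, Finset.prod_univ_sum, Finset.mul_sum]
    refine Finset.sum_congr rfl fun n _ ↦ ?_
    rw [Finset.prod_mul_distrib, multiPow_add, mul_left_comm]
    rfl
  have hint (n : τ → ℕ) : Integrable
      (fun ω ↦ ((∏ j, (P j).coeff (n j)) * multiPow (X ω) (a + n)) • g ω) μ := by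
    simpa only [mul_smul, Pi.smul_def] using (integrable_multiPow_smul hX hg hXr (a + n)).smul _
  simp only [hexpand, Finset.sum_smul]
  rw [integral_finsetSum _ fun n _ ↦ hint n]
  simp only [weightedCoeffNorm_eq_sum_support, Finset.prod_univ_sum, Finset.mul_sum, mul_smul,
    integral_smul]
  refine norm_sum_le_of_le _ fun n _ ↦ ?_
  calc ‖(∏ j, (P j).coeff (n j)) • vectorMoment μ X g (a + n)‖
      ≤ (∏ j, |(P j).coeff (n j)|) * (Λ * r ^ ∑ j, (a + n) j) := by
        rw [norm_smul, Real.norm_eq_abs, Finset.abs_prod]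
        gcongr
        exact hΛ (a + n)
    _ = Λ * r ^ (∑ j, a j) * ∏ j, |(P j).coeff (n j)| * r ^ n j := by
        simp only [Pi.add_apply, Finset.sum_add_distrib, pow_add, Finset.prod_mul_distrib,
          Finset.prod_pow_eq_pow_sum]
        ring

/-- The multi-indices `i ≤ α`, in the form to which `Finset.prod_univ_sum` applies. -/
def multiRange [DecidableEq τ] (α : τ → ℕ) : Finset (τ → ℕ) :=
  Fintype.piFinset fun j ↦ Finset.range (α j + 1)

lemma mem_multiRange [DecidableEq τ] {α i : τ → ℕ} : i ∈ multiRange α ↔ ∀ j, i j ≤ α j := by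
  simp [multiRange]

/-- The coefficients of `x ^ α` in the multi-index powers of `1 + x`. -/
def multiSignedChoose (α i : τ → ℕ) : ℝ :=
  ∏ j, signedChoose (α j) (i j)

lemma sum_abs_multiSignedChoose [DecidableEq τ] (α : τ → ℕ) :
    ∑ i ∈ multiRange α, |multiSignedChoose α i| = 2 ^ ∑ j, α j := by
  simp only [multiSignedChoose, multiRange, Finset.abs_prod]
  rw [← Finset.prod_univ_sum (fun j ↦ Finset.range (α j + 1)) fun j i ↦ |signedChoose (α j) i|]
  simp only [sum_abs_signedChoose, Finset.prod_pow_eq_pow_sum]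

lemma sum_multiSignedChoose_mul_multiPow [DecidableEq τ] (α c : τ → ℕ) (x : τ → ℝ) :
    ∑ i ∈ multiRange α, multiSignedChoose α i * multiPow (fun j ↦ (i j : ℝ)) c *
      multiPow (1 + x) i = ∏ j, ((shiftedEuler ^ c j) (Polynomial.X ^ α j)).eval (x j) := by
  simp only [← sum_signedChoose_mul_pow, Finset.prod_univ_sum, multiPow, multiSignedChoose,
    multiRange, Finset.prod_mul_distrib, Pi.add_apply, Pi.one_apply]

end Polynomial

lemma integrable_multiPow_one_add_smul (hX : Measurable X) (hg : Integrable g μ) (hr1 : r ≤ 1)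
    (hXr : ∀ ω, g ω ≠ 0 → ∀ j, |X ω j| ≤ r) (i : τ → ℕ) :
    Integrable (fun ω ↦ multiPow (1 + X ω) i • g ω) μ :=
  integrable_multiPow_smul (X := fun ω ↦ 1 + X ω) (r := 2) (by fun_prop) hg (fun ω hω j ↦ by
    have := abs_le.1 (hXr ω hω j)
    rw [Pi.add_apply, Pi.one_apply, abs_le]
    constructor <;> linarith) i

lemma HasMonomialExpansion.hasSum_vectorMoment [CompleteSpace F] {e : ι → τ ⊕ τ → ℕ}
    {u : ι → F →L[ℝ] F} {G : (τ ⊕ τ → ℝ) → F →L[ℝ] F} (hG : HasMonomialExpansion e u r C G)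
    (hX : Measurable X) (hg : Integrable g μ) (hr : 0 ≤ r)
    (hXr : ∀ ω, g ω ≠ 0 → ∀ j, |X ω j| ≤ r)
    {t : τ → ℝ} (ht : ∀ j, |t j| ≤ r) :
    HasSum (fun k ↦ multiPow t (e k ∘ Sum.inr) • u k (vectorMoment μ X g (e k ∘ Sum.inl)))
      (∫ ω, G (Sum.elim (X ω) t) (g ω) ∂μ) := by
  set f : ι → Ω → F := fun k ω ↦ multiPow (Sum.elim (X ω) t) (e k) • u k (g ω) with hf
  have hfactor (k : ι) (ω : Ω) : f k ω =
      multiPow t (e k ∘ Sum.inr) • u k (multiPow (X ω) (e k ∘ Sum.inl) • g ω) := by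
    rw [map_smul, smul_smul, mul_comm, ← multiPow_sumElim]
  have hmoment (k : ι) := integrable_multiPow_smul hX hg hXr (e k ∘ Sum.inl)
  have hint (k : ι) : Integrable (f k) μ := by
    simp only [funext (hfactor k)]
    exact ((u k).integrable_comp (hmoment k)).smul _
  have hbound (k : ι) (ω : Ω) : ‖f k ω‖ ≤ ‖u k‖ * r ^ (∑ j, e k j) * ‖g ω‖ := by
    rcases eq_or_ne (g ω) 0 with h0 | h0
    · simp [hf, h0]
    · calc ‖f k ω‖ ≤ r ^ (∑ j, e k j) * (‖u k‖ * ‖g ω‖) := by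
            rw [norm_smul]
            gcongr
            · exact abs_multiPow_le_pow (Sum.forall.2 ⟨hXr ω h0, ht⟩) _
            · exact (u k).le_opNorm _
        _ = _ := by ring
  have hsummable : Summable fun k ↦ ∫ ω, ‖f k ω‖ ∂μ := by
    refine .of_nonneg_of_le (fun k ↦ by positivity) (fun k ↦ ?_)
      (hG.summable.mul_right (∫ ω, ‖g ω‖ ∂μ))
    rw [← integral_const_mul]
    exact integral_mono (hint k).norm (hg.norm.const_mul _) (hbound k)
  convert hasSum_integral_of_summable_integral_norm hint hsummable using 2 with k
  · simp only [hfactor, integral_smul]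
    rw [(u k).integral_comp_comm (hmoment k), vectorMoment]
  · funext ω
    rcases eq_or_ne (g ω) 0 with h0 | h0
    · simp [hf, h0]
    · exact ((hG.hasSum _ (Sum.forall.2 ⟨hXr ω h0, ht⟩)).mapL
        (ContinuousLinearMap.apply ℝ F (g ω))).tsum_eq.symm

lemma sum_multiSignedChoose_smul_vectorMoment [DecidableEq τ] (hX : Measurable X)
    (hg : Integrable g μ) (hr1 : r ≤ 1) (hXr : ∀ ω, g ω ≠ 0 → ∀ j, |X ω j| ≤ r)
    (a c α : τ → ℕ) :
    ∑ i ∈ multiRange α, (multiSignedChoose α i * multiPow (fun j ↦ i j / m) c) •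
        vectorMoment μ X (fun ω ↦ multiPow (1 + X ω) i • g ω) a =
      (m ^ ∑ j, c j)⁻¹ • ∫ ω, (multiPow (X ω) a *
        ∏ j, ((shiftedEuler ^ c j) (Polynomial.X ^ α j)).eval (X ω j)) • g ω ∂μ := by
  have hint (i : τ → ℕ) : Integrable (fun ω ↦ (multiSignedChoose α i *
      multiPow (fun j ↦ (i j : ℝ)) c) • multiPow (X ω) a • multiPow (1 + X ω) i • g ω) μ :=
    (integrable_multiPow_smul hX (integrable_multiPow_one_add_smul hX hg hr1 hXr i)
      (fun ω hω ↦ hXr ω (right_ne_zero_of_smul hω)) a).smul _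
  simp only [← sum_multiSignedChoose_mul_multiPow, Finset.mul_sum, Finset.sum_smul]
  rw [← integral_smul]
  simp only [Finset.smul_sum, multiPow_div, vectorMoment, ← integral_smul]
  rw [integral_finsetSum _ fun i _ ↦ ?_]
  · refine Finset.sum_congr rfl fun i _ ↦ integral_congr_ae (.of_forall fun ω ↦ ?_)
    simp only [smul_smul]
    ring_nf
  · convert (hint i).smul (m ^ ∑ j, c j)⁻¹ using 2 with ω
    simp only [Pi.smul_apply, smul_smul]
    ring_nf

lemma norm_sum_multiSignedChoose_smul_vectorMoment_le [DecidableEq τ] (hX : Measurable X)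
    (hg : Integrable g μ) (hr : 0 < r) (hr1 : r ≤ 1) (hXr : ∀ ω, g ω ≠ 0 → ∀ j, |X ω j| ≤ r)
    (hΛ : ∀ α, ‖vectorMoment μ X g α‖ ≤ Λ * r ^ ∑ j, α j) (hm : 0 < m)
    (hKr : K * (1 + 1 / r) / m ≤ r) {α : τ → ℕ} (hα : ∀ j, α j ≤ K) (a c : τ → ℕ) :
    ‖∑ i ∈ multiRange α, (multiSignedChoose α i *
        (multiPow (fun j ↦ i j / m) c - multiPow 0 c)) •
        vectorMoment μ X (fun ω ↦ multiPow (1 + X ω) i • g ω) a‖ ≤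
      Λ * r ^ (∑ j, α j) * (K * (1 + 1 / r) / m / r * r ^ (∑ j, a j + ∑ j, c j)) := by
  have hΛ0 : 0 ≤ Λ := by simpa using (norm_nonneg _).trans (hΛ 0)
  rcases eq_or_ne c 0 with rfl | hc
  · simp only [multiPow_zero_right, sub_self, mul_zero, zero_smul, Finset.sum_const_zero,
      norm_zero]
    positivity
  have hc1 : ∑ j, c j ≠ 0 := fun h ↦ hc (funext fun j ↦
    Finset.sum_eq_zero_iff.1 h j (Finset.mem_univ j))
  set q := K * (1 + 1 / r) / m with hq
  have : 0 ≤ q := by positivity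
  have hqc : q ^ (∑ j, c j) ≤ q / r * r ^ ∑ j, c j := by
    obtain ⟨l, hl⟩ := Nat.exists_eq_succ_of_ne_zero hc1
    rw [hl, pow_succ', pow_succ', ← mul_assoc, div_mul_cancel₀ _ hr.ne']
    gcongr
  simp only [multiPow_zero_left hc, sub_zero]
  rw [sum_multiSignedChoose_smul_vectorMoment hX hg hr1 hXr, norm_smul, norm_inv,
    Real.norm_of_nonneg (by positivity)]
  calc (m ^ ∑ j, c j)⁻¹ * ‖∫ ω, (multiPow (X ω) a *
        ∏ j, ((shiftedEuler ^ c j) (Polynomial.X ^ α j)).eval (X ω j)) • g ω ∂μ‖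
      ≤ (m ^ ∑ j, c j)⁻¹ * (Λ * r ^ (∑ j, a j) *
          ∏ j, ((K * (1 + 1 / r)) ^ c j * r ^ α j)) := by
        gcongr
        refine (norm_integral_multiPow_mul_prod_eval_le hX hg hXr hΛ a _).trans ?_
        gcongr with j
        · exact fun j _ ↦ weightedCoeffNorm_nonneg hr.le _
        · exact weightedCoeffNorm_shiftedEuler_pow_X_pow_le hr (hα j) (c j)
    _ = Λ * r ^ (∑ j, α j) * (q ^ (∑ j, c j) * r ^ ∑ j, a j) := by
        rw [Finset.prod_mul_distrib, Finset.prod_pow_eq_pow_sum, Finset.prod_pow_eq_pow_sum, hq,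
          div_pow]
        ring
    _ ≤ Λ * r ^ (∑ j, α j) * (q / r * r ^ (∑ j, a j + ∑ j, c j)) := by
        rw [pow_add, mul_comm (r ^ ∑ j, a j), ← mul_assoc (q / r)]
        gcongr

variable [CompleteSpace F] {e : ι → τ ⊕ τ → ℕ} {u : ι → F →L[ℝ] F}
  {G : (τ ⊕ τ → ℝ) → F →L[ℝ] F}

lemma HasMonomialExpansion.hasSum_sum_multiSignedChoose [DecidableEq τ]
    (hG : HasMonomialExpansion e u r C G)
    (hG0 : ∀ x, (∀ j, |x j| ≤ r) → G (Sum.elim x 0) = 1) (hX : Measurable X)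
    (hg : Integrable g μ) (hr : 0 ≤ r) (hr1 : r ≤ 1) (hXr : ∀ ω, g ω ≠ 0 → ∀ j, |X ω j| ≤ r)
    {α : τ → ℕ} (hα : ∀ i ∈ multiRange α, ∀ j, |(i j : ℝ) / m| ≤ r) :
    HasSum (fun k ↦ u k (∑ i ∈ multiRange α, (multiSignedChoose α i *
        (multiPow (fun j ↦ i j / m) (e k ∘ Sum.inr) - multiPow 0 (e k ∘ Sum.inr))) •
        vectorMoment μ X (fun ω ↦ multiPow (1 + X ω) i • g ω) (e k ∘ Sum.inl)))
      (∑ i ∈ multiRange α, multiSignedChoose α i •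
        ∫ ω, G (Sum.elim (X ω) fun j ↦ i j / m) (multiPow (1 + X ω) i • g ω) ∂μ -
        vectorMoment μ X g α) := by
  have hgi (i : τ → ℕ) := integrable_multiPow_one_add_smul hX hg hr1 hXr i
  have hXri (i : τ → ℕ) (ω : Ω) (hω : multiPow (1 + X ω) i • g ω ≠ 0) :=
    hXr ω (right_ne_zero_of_smul hω)
  have hbase (i : τ → ℕ) (ω : Ω) : G (Sum.elim (X ω) 0) (multiPow (1 + X ω) i • g ω) =
      multiPow (1 + X ω) i • g ω := by
    rcases eq_or_ne (g ω) 0 with h0 | h0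
    · simp [h0]
    · rw [hG0 _ (hXr ω h0), one_apply_eq_self]
  have hmoment : ∑ i ∈ multiRange α, multiSignedChoose α i •
      ∫ ω, multiPow (1 + X ω) i • g ω ∂μ = vectorMoment μ X g α := by
    simpa [vectorMoment, multiPow_zero_right, multiPow] using
      sum_multiSignedChoose_smul_vectorMoment (m := 1) hX hg hr1 hXr 0 0 α
  have hsum := hasSum_sum fun i hi ↦
    ((hG.hasSum_vectorMoment hX (hgi i) hr (hXri i) (hα i hi)).sub
      (hG.hasSum_vectorMoment hX (hgi i) hr (hXri i) (t := 0) (by simp [hr]))).const_smul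
        (multiSignedChoose α i)
  simp only [hbase, smul_sub _ (∫ _, _ ∂μ), Finset.sum_sub_distrib _ (fun _ ↦ _ • ∫ _, _ ∂μ),
    hmoment] at hsum
  simpa only [map_sum, map_sub, map_smul, mul_smul, sub_smul] using hsum

lemma HasMonomialExpansion.norm_sum_smul_integral_sub_vectorMoment_le [DecidableEq τ]
    (hG : HasMonomialExpansion e u r C G)
    (hG0 : ∀ x, (∀ j, |x j| ≤ r) → G (Sum.elim x 0) = 1) (hX : Measurable X)
    (hg : Integrable g μ) (hr : 0 < r) (hr1 : r ≤ 1) (hXr : ∀ ω, g ω ≠ 0 → ∀ j, |X ω j| ≤ r)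
    (hΛ : ∀ α, ‖vectorMoment μ X g α‖ ≤ Λ * r ^ ∑ j, α j) (hm : 0 < m)
    (hKr : K * (1 + 1 / r) / m ≤ r) {α : τ → ℕ} (hα : ∀ j, α j ≤ K) :
    ‖∑ i ∈ multiRange α, multiSignedChoose α i •
        ∫ ω, G (Sum.elim (X ω) fun j ↦ i j / m) (multiPow (1 + X ω) i • g ω) ∂μ -
      vectorMoment μ X g α‖ ≤ Λ * r ^ (∑ j, α j) * (K * (1 + 1 / r) / m / r) * C := by
  have hΛ0 : 0 ≤ Λ := by simpa using (norm_nonneg _).trans (hΛ 0)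
  have htr (i : τ → ℕ) (hi : i ∈ multiRange α) (j : τ) : |(i j : ℝ) / m| ≤ r := by
    rw [abs_of_nonneg (by positivity)]
    refine le_trans ?_ hKr
    gcongr
    exact (Nat.cast_le.2 ((mem_multiRange.1 hi j).trans (hα j))).trans
      (le_mul_of_one_le_right K.cast_nonneg (le_add_of_nonneg_right (by positivity)))
  have hsum := hG.hasSum_sum_multiSignedChoose hG0 hX hg hr.le hr1 hXr htr
  rw [← hsum.tsum_eq]
  refine (tsum_of_norm_bounded (hG.summable.hasSum.mul_left _) fun k ↦ ?_).trans
    (mul_le_mul_of_nonneg_left hG.tsum_le (by positivity))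
  refine ((u k).le_opNorm _).trans ?_
  grw [norm_sum_multiSignedChoose_smul_vectorMoment_le hX hg hr hr1 hXr hΛ hm hKr hα]
  refine le_of_eq ?_
  rw [Fintype.sum_sum_type]
  simp only [Function.comp_apply]
  ring

lemma HasMonomialExpansion.norm_vectorMoment_le_of_le (hG : HasMonomialExpansion e u r C G)
    (hG0 : ∀ x, (∀ j, |x j| ≤ r) → G (Sum.elim x 0) = 1) (hX : Measurable X)
    (hg : Integrable g μ) (hr : 0 < r) (hr1 : r ≤ 1) (hXr : ∀ ω, g ω ≠ 0 → ∀ j, |X ω j| ≤ r)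
    (hΛ : ∀ α, ‖vectorMoment μ X g α‖ ≤ Λ * r ^ ∑ j, α j) (hm : 0 < m)
    (hKr : K * (1 + 1 / r) / m ≤ r) (hKC : K * (1 + 1 / r) / m * C ≤ r / 2)
    (hη : ∀ i : τ → ℕ, (∀ j, i j ≤ K) →
      ‖∫ ω, G (Sum.elim (X ω) fun j ↦ i j / m) (multiPow (1 + X ω) i • g ω) ∂μ‖ ≤ η)
    {α : τ → ℕ} (hα : ∀ j, α j ≤ K) :
    ‖vectorMoment μ X g α‖ ≤ ((2 / r) ^ (Fintype.card τ * K) * η + Λ / 2) * r ^ ∑ j, α j := by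
  classical
  have hΛ0 : 0 ≤ Λ := by simpa using (norm_nonneg _).trans (hΛ 0)
  have hη0 : 0 ≤ η := (norm_nonneg _).trans (hη 0 fun _ ↦ K.zero_le)
  set S := ∑ i ∈ multiRange α, multiSignedChoose α i •
    ∫ ω, G (Sum.elim (X ω) fun j ↦ i j / m) (multiPow (1 + X ω) i • g ω) ∂μ
  have hdeg : ∑ j, α j ≤ Fintype.card τ * K := by
    simpa using Finset.sum_le_card_nsmul Finset.univ α K fun j _ ↦ hα j
  have hS : ‖S‖ ≤ (2 / r) ^ (Fintype.card τ * K) * η * r ^ ∑ j, α j := by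
    calc ‖S‖ ≤ ∑ i ∈ multiRange α, |multiSignedChoose α i| * η := by
          refine norm_sum_le_of_le _ fun i hi ↦ (norm_smul_le _ _).trans ?_
          rw [Real.norm_eq_abs]
          gcongr
          exact hη i fun j ↦ (mem_multiRange.1 hi j).trans (hα j)
      _ = (2 / r) ^ (∑ j, α j) * η * r ^ ∑ j, α j := by
          rw [← Finset.sum_mul, sum_abs_multiSignedChoose, div_pow]
          field_simp
      _ ≤ (2 / r) ^ (Fintype.card τ * K) * η * r ^ ∑ j, α j := by
          gcongr
          exact (one_le_div hr).2 (by linarith)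
  have hrem : ‖S - vectorMoment μ X g α‖ ≤ Λ / 2 * r ^ ∑ j, α j := by
    grw [hG.norm_sum_smul_integral_sub_vectorMoment_le hG0 hX hg hr hr1 hXr hΛ hm hKr hα]
    calc Λ * r ^ (∑ j, α j) * (K * (1 + 1 / r) / m / r) * C
        = Λ * r ^ (∑ j, α j) * (K * (1 + 1 / r) / m * C / r) := by ring
      _ ≤ Λ * r ^ (∑ j, α j) * (r / 2 / r) := by gcongr
      _ = Λ / 2 * r ^ ∑ j, α j := by field_simp
  rw [add_mul]
  exact (norm_le_insert' _ S).trans (add_le_add hS (by rwa [norm_sub_rev]))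

theorem HasMonomialExpansion.norm_vectorMoment_le_max
    (hG : HasMonomialExpansion e u r C G)
    (hG0 : ∀ x, (∀ j, |x j| ≤ r) → G (Sum.elim x 0) = 1) (hX : Measurable X)
    (hg : Integrable g μ) (hr : 0 < r) (hr1 : r ≤ 1)
    (hXr : ∀ ω, g ω ≠ 0 → ∀ j, |X ω j| ≤ r / 2) (hm : 0 < m)
    (hKr : K * (1 + 1 / r) / m ≤ r) (hKC : K * (1 + 1 / r) / m * C ≤ r / 2)
    (hη : ∀ i : τ → ℕ, (∀ j, i j ≤ K) →
      ‖∫ ω, G (Sum.elim (X ω) fun j ↦ i j / m) (multiPow (1 + X ω) i • g ω) ∂μ‖ ≤ η)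
    (α : τ → ℕ) :
    ‖vectorMoment μ X g α‖ ≤
      max (2 * ((2 / r) ^ (Fintype.card τ * K) * η)) ((1 / 2) ^ K * ∫ ω, ‖g ω‖ ∂μ) *
        r ^ ∑ j, α j := by
  have hXr' (ω : Ω) (hω : g ω ≠ 0) (j : τ) : |X ω j| ≤ r := (hXr ω hω j).trans (by linarith)
  set ratio : (τ → ℕ) → ℝ := fun α ↦ ‖vectorMoment μ X g α‖ / r ^ ∑ j, α j
  have hbdd : BddAbove (Set.range ratio) := by
    refine ⟨∫ ω, ‖g ω‖ ∂μ, Set.forall_mem_range.2 fun α ↦ (div_le_iff₀ (by positivity)).2 ?_⟩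
    rw [mul_comm]
    exact norm_vectorMoment_le hg hXr' α
  set Λ := ⨆ α, ratio α
  have hΛ (α : τ → ℕ) : ‖vectorMoment μ X g α‖ ≤ Λ * r ^ ∑ j, α j :=
    (div_le_iff₀ (by positivity)).1 (le_ciSup hbdd α)
  set A := (2 / r) ^ (Fintype.card τ * K) * η
  set B := (1 / 2) ^ K * ∫ ω, ‖g ω‖ ∂μ
  have himproved : Λ ≤ max (A + Λ / 2) B := by
    refine ciSup_le fun α ↦ (div_le_iff₀ (by positivity)).2 ?_
    by_cases hα : ∀ j, α j ≤ K
    · refine (hG.norm_vectorMoment_le_of_le hG0 hX hg hr hr1 hXr' hΛ hm hKr hKC hη hα).trans ?_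
      gcongr
      exact le_max_left _ _
    · obtain ⟨j, hj⟩ := not_forall.1 hα
      have hdeg : K ≤ ∑ j, α j := (not_le.1 hj).le.trans
        (Finset.single_le_sum (fun _ _ ↦ Nat.zero_le _) (Finset.mem_univ j))
      refine (norm_vectorMoment_le_of_le_sum hg hr.le hXr hdeg).trans ?_
      gcongr
      exact le_max_right _ _
  refine (hΛ α).trans ?_
  gcongr
  rcases le_max_iff.1 himproved with h | h
  · exact le_max_of_le_left (by linarith)
  · exact le_max_of_le_right h

end MomentContraction

section MomentUniqueness

lemma exists_eval_near_of_injective {Ω τ : Type*} [TopologicalSpace Ω] {X : Ω → τ → ℝ}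
    {k : Set Ω} (hX : Continuous X) (hinj : Function.Injective X) (hk : IsCompact k)
    (φ : C(Ω, ℝ)) {ε : ℝ} (hε : 0 < ε) :
    ∃ P : MvPolynomial τ ℝ, ∀ ω ∈ k, |φ ω - P.eval (X ω)| ≤ ε := by
  let coord (j : τ) : C(Ω, ℝ) := ⟨fun ω ↦ X ω j, by fun_prop⟩
  have hsep : (Algebra.adjoin ℝ (Set.range coord)).SeparatesPoints := by
    intro a b hab
    obtain ⟨j, hj⟩ := Function.ne_iff.1 (hinj.ne hab)
    exact ⟨coord j, ⟨_, Algebra.subset_adjoin ⟨j, rfl⟩, rfl⟩, hj⟩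
  obtain ⟨q, hq, hqφ⟩ :=
    ContinuousMap.exists_mem_subalgebra_near_continuous_of_isCompact_of_separatesPoints hsep φ hk hε
  rw [Algebra.adjoin_range_eq_range_aeval] at hq
  obtain ⟨P, rfl⟩ := hq
  refine ⟨P, fun ω hω ↦ ?_⟩
  have heval : P.aeval coord ω = P.eval (X ω) := by
    simpa [coord] using DFunLike.congr_fun (MvPolynomial.comp_aeval coord
      (ContinuousMap.evalAlgHom ℝ ℝ ω)) P
  rw [abs_sub_comm, ← heval]
  exact (hqφ ω hω).le

variable {Ω τ F : Type*} [MeasurableSpace Ω] {μ : Measure Ω} [Fintype τ] [NormedAddCommGroup F]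
  [NormedSpace ℝ F] {X : Ω → τ → ℝ} {g : Ω → F}

lemma integral_eval_smul_eq_zero (hint : ∀ α, Integrable (fun ω ↦ multiPow (X ω) α • g ω) μ)
    (hmom : ∀ α, vectorMoment μ X g α = 0) (P : MvPolynomial τ ℝ) :
    ∫ ω, P.eval (X ω) • g ω ∂μ = 0 := by
  have heval (x : τ → ℝ) : P.eval x = ∑ d ∈ P.support, P.coeff d * multiPow x d :=
    MvPolynomial.eval_eq' x P
  simp only [heval, Finset.sum_smul, mul_smul]
  rw [integral_finsetSum P.support fun d _ ↦ (hint d).fun_smul (P.coeff d)]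
  refine Finset.sum_eq_zero fun d _ ↦ ?_
  rw [integral_smul]
  exact smul_eq_zero_of_right _ (hmom d)

variable [TopologicalSpace Ω] [BorelSpace Ω] {k : Set Ω}

theorem integral_smul_eq_zero_of_forall_vectorMoment_eq_zero (hX : Continuous X)
    (hinj : Function.Injective X) (hk : IsCompact k) (hg : Integrable g μ)
    (hgk : ∀ ω, g ω ≠ 0 → ω ∈ k) (hmom : ∀ α, vectorMoment μ X g α = 0) (φ : C(Ω, ℝ)) :
    ∫ ω, φ ω • g ω ∂μ = 0 := by
  have hint (ψ : Ω → ℝ) (hψ : Continuous ψ) : Integrable (fun ω ↦ ψ ω • g ω) μ := by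
    obtain ⟨B, hB⟩ := hk.exists_bound_of_continuousOn hψ.continuousOn
    exact integrable_smul_of_abs_le hg hψ.measurable fun ω hω ↦ hB ω (hgk ω hω)
  refine norm_le_zero_iff.1 (le_of_forall_pos_le_add fun ε hε ↦ ?_)
  set M := ∫ ω, ‖g ω‖ ∂μ
  have hM : 0 ≤ M := by positivity
  obtain ⟨P, hP⟩ := exists_eval_near_of_injective hX hinj hk φ (ε := ε / (M + 1)) (by positivity)
  have hPc : Continuous fun ω ↦ P.eval (X ω) := P.continuous_eval.comp hX
  calc ‖∫ ω, φ ω • g ω ∂μ‖ = ‖∫ ω, (φ ω - P.eval (X ω)) • g ω ∂μ‖ := by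
        simp only [sub_smul]
        rw [integral_sub (hint _ φ.continuous) (hint _ hPc),
          integral_eval_smul_eq_zero (fun α ↦ hint _ (by fun_prop)) hmom, sub_zero]
    _ ≤ ε / (M + 1) * M := norm_integral_smul_le hg fun ω hω ↦ hP ω (hgk ω hω)
    _ ≤ ε / (M + 1) * (M + 1) := by gcongr; linarith
    _ = 0 + ε := by field_simp; ring

end MomentUniqueness

theorem eqOn_interior_of_forall_vectorMoment_eq_zero {E τ F : Type*} [NormedAddCommGroup E]
    [NormedSpace ℝ E] [FiniteDimensional ℝ E] [MeasurableSpace E] [BorelSpace E] {μ : Measure E}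
    [μ.IsOpenPosMeasure] [IsFiniteMeasureOnCompacts μ] [Fintype τ] [NormedAddCommGroup F]
    [NormedSpace ℝ F] [CompleteSpace F] {X : E → τ → ℝ} {G : E → F} {S : Set E}
    (hX : Continuous X) (hinj : Function.Injective X) (hS : MeasurableSet S) (hG : Continuous G)
    (hGc : HasCompactSupport G) (hmom : ∀ α, vectorMoment μ X (S.indicator G) α = 0) :
    Set.EqOn G 0 (interior S) := by
  have hint : Integrable (S.indicator G) μ := (hG.integrable_of_hasCompactSupport hGc).indicator hS
  have hzero : ∀ᵐ x ∂μ, S.indicator G x = 0 :=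
    ae_eq_zero_of_integral_contDiff_smul_eq_zero hint.locallyIntegrable fun φ hφ _ ↦
      integral_smul_eq_zero_of_forall_vectorMoment_eq_zero hX hinj hGc hint
        (fun x hx ↦ subset_tsupport G (Set.indicator_apply_ne_zero.1 hx).2) hmom ⟨φ, hφ.continuous⟩
  refine Measure.eqOn_open_of_ae_eq (μ := μ) ?_ isOpen_interior hG.continuousOn
    continuousOn_const
  filter_upwards [ae_restrict_mem isOpen_interior.measurableSet, ae_restrict_of_ae hzero]
    with x hxS hx
  rwa [Set.indicator_of_mem (interior_subset hxS)] at hx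

section HalfPlane

variable {F : Type*} [NormedAddCommGroup F] [NormedSpace ℝ F] {Ψ : ℝ × ℝ → F} {ξ j δ : ℝ}

lemma measurePreserving_shear (ξ : ℝ) :
    MeasurePreserving fun p : ℝ × ℝ ↦ (p.1, ξ * p.1 + p.2) :=
  (MeasurePreserving.id volume).skew_product (g := fun x y ↦ ξ * x + y) (by fun_prop)
    (.of_forall fun x ↦ (measurePreserving_add_left volume (ξ * x)).map_eq)

lemma measurableEmbedding_shear (ξ : ℝ) :
    MeasurableEmbedding fun p : ℝ × ℝ ↦ (p.1, ξ * p.1 + p.2) := by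
  refine Continuous.measurableEmbedding (by fun_prop) fun p q hpq ↦ ?_
  simp only [Prod.mk.injEq] at hpq
  exact Prod.ext hpq.1 (by simpa [hpq.1] using hpq.2)

lemma integral_smul_eq_zero_of_forall_line {b : ℝ → ℝ}
    (h : ∀ y, b y ≠ 0 → ∫ x, Ψ (x, ξ * x + y) = 0) :
    ∫ p : ℝ × ℝ, b (p.2 - ξ * p.1) • Ψ p = 0 := by
  by_cases hint : Integrable fun p : ℝ × ℝ ↦ b (p.2 - ξ * p.1) • Ψ p
  · rw [← (measurePreserving_shear ξ).integral_comp (measurableEmbedding_shear ξ),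
      Measure.volume_eq_prod, integral_prod_symm]
    · refine integral_eq_zero_of_ae (.of_forall fun y ↦ ?_)
      simp only [add_sub_cancel_left, integral_smul, Pi.zero_apply]
      exact smul_eq_zero.2 ((em (b y = 0)).imp_right (h y))
    · exact (measurePreserving_shear ξ).integrable_comp_of_integrable hint
  · exact integral_undef hint

lemma setIntegral_exp_smul_eq_zero {a : ℝ} (hline : ∀ y, a ≤ y → ∫ x, Ψ (x, ξ * x + y) = 0) :
    ∫ p in {p : ℝ × ℝ | a ≤ p.2 - ξ * p.1}, Real.exp (j * (p.2 - ξ * p.1)) • Ψ p = 0 := by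
  rw [← integral_indicator (measurableSet_le measurable_const (by fun_prop)),
    Set.indicator_smul_left]
  exact integral_smul_eq_zero_of_forall_line
    (b := (Set.Ici a).indicator fun y ↦ Real.exp (j * y)) fun y hy ↦
      hline y (Set.mem_of_indicator_ne_zero hy)

lemma norm_setIntegral_exp_smul_le (hΨ : Continuous Ψ) (hΨc : HasCompactSupport Ψ)
    (hΨ1 : ∀ p, Ψ p ≠ 0 → |p.1| ≤ 1) (hξ : |ξ| ≤ δ / 2) (hj : 0 ≤ j)
    (hline : ∀ y, -δ ≤ y → ∫ x, Ψ (x, ξ * x + y) = 0) :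
    ‖∫ p in {p : ℝ × ℝ | -δ ≤ p.2}, Real.exp (j * (p.2 - ξ * p.1)) • Ψ p‖ ≤
      Real.exp (-(j * (δ / 2))) * ∫ p, ‖Ψ p‖ := by
  set Φ : ℝ × ℝ → F := fun p ↦ Real.exp (j * (p.2 - ξ * p.1)) • Ψ p with hΦ
  set S := {p : ℝ × ℝ | -δ ≤ p.2}
  set T := {p : ℝ × ℝ | -δ ≤ p.2 - ξ * p.1}
  have hS : MeasurableSet S := measurableSet_le measurable_const measurable_snd
  have hT : MeasurableSet T := measurableSet_le measurable_const (by fun_prop)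
  have hΦi : Integrable Φ :=
    Continuous.integrable_of_hasCompactSupport (by fun_prop) hΨc.smul_left
  have hTzero : ∫ p in T, Φ p = 0 := setIntegral_exp_smul_eq_zero hline
  have hbound (p : ℝ × ℝ) :
      ‖S.indicator Φ p - T.indicator Φ p‖ ≤ Real.exp (-(j * (δ / 2))) * ‖Ψ p‖ := by
    have hexp (hle : p.2 - ξ * p.1 ≤ -(δ / 2)) : ‖Φ p‖ ≤ Real.exp (-(j * (δ / 2))) * ‖Ψ p‖ := by
      rw [hΦ, norm_smul, Real.norm_eq_abs, Real.abs_exp, ← mul_neg]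
      gcongr
    have hδ : 0 ≤ δ := by linarith [abs_nonneg ξ]
    rcases eq_or_ne (Ψ p) 0 with h0 | h0
    · simp [hΦ, h0, Set.indicator]
    have hξp : |ξ * p.1| ≤ δ / 2 := by
      rw [abs_mul]
      exact (mul_le_of_le_one_right (abs_nonneg ξ) (hΨ1 p h0)).trans hξ
    by_cases hpS : p ∈ S <;> by_cases hpT : p ∈ T <;> simp only [Set.indicator, hpS, hpT,
      if_true, if_false, sub_self, sub_zero, zero_sub, norm_neg, norm_zero]
    · positivity
    · exact hexp (by linarith [(lt_of_not_ge hpT : p.2 - ξ * p.1 < -δ)])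
    · exact hexp (by linarith [(lt_of_not_ge hpS : p.2 < -δ), (abs_le.1 hξp).1])
    · positivity
  rw [← sub_zero (∫ p in S, Φ p), ← hTzero, ← integral_indicator hS, ← integral_indicator hT,
    ← integral_sub (hΦi.indicator hS) (hΦi.indicator hT), ← integral_const_mul]
  exact norm_integral_le_of_norm_le
    ((hΨ.integrable_of_hasCompactSupport hΨc).norm.const_mul _) (.of_forall hbound)

end HalfPlane

section PlanarTheorem

/-- The coordinates `(exp p.1 - 1, exp p.2 - 1)` of a point `p` of the plane, in which the factors
`exp (k * p.1)` and `exp (k * p.2)` become powers. -/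
noncomputable def expCoord (p : ℝ × ℝ) : Fin 2 → ℝ :=
  ![Real.exp p.1 - 1, Real.exp p.2 - 1]

/-- The point of the plane with given `expCoord`. -/
noncomputable def logCoord (x : Fin 2 → ℝ) : ℝ × ℝ :=
  (Real.log (1 + x 0), Real.log (1 + x 1))

lemma logCoord_expCoord (p : ℝ × ℝ) : logCoord (expCoord p) = p := by
  simp [logCoord, expCoord]

lemma injective_expCoord : Function.Injective expCoord :=
  Function.LeftInverse.injective logCoord_expCoord

@[fun_prop]
lemma continuous_expCoord : Continuous expCoord := by
  unfold expCoord
  fun_prop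

lemma multiPow_one_add_expCoord (p : ℝ × ℝ) (i : Fin 2 → ℕ) :
    multiPow (1 + expCoord p) i = Real.exp (i 0 * p.1 + i 1 * p.2) := by
  simp [multiPow, expCoord, Real.exp_add, Real.exp_nat_mul]

variable {ι F : Type*} [NormedAddCommGroup F] [NormedSpace ℝ F]
  {V : ℝ × ℝ → ℝ → F →L[ℝ] F} {h : ℝ × ℝ → F} {e : ι → Fin 2 ⊕ Fin 2 → ℕ} {u : ι → F →L[ℝ] F}
  {r C δ δ₀ m M : ℝ}

/-- The weight `V p ξ` along lines of slope `ξ = -t 0 / (1 + t 1)` relative to the weight along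
horizontal lines, as a function of the coordinates `expCoord p` and of the slope parameters `t`. -/
noncomputable def relativeAmplitude (V : ℝ × ℝ → ℝ → F →L[ℝ] F) (z : Fin 2 ⊕ Fin 2 → ℝ) :
    F →L[ℝ] F :=
  V (logCoord (z ∘ Sum.inl)) (-z (.inr 0) / (1 + z (.inr 1))) *
    Ring.inverse (V (logCoord (z ∘ Sum.inl)) 0)

lemma relativeAmplitude_expCoord_apply {p : ℝ × ℝ} (hV : IsUnit (V p 0)) (t : Fin 2 → ℝ) (a : F) :
    relativeAmplitude V (Sum.elim (expCoord p) t) (V p 0 a) = V p (-t 0 / (1 + t 1)) a := by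
  simp only [relativeAmplitude, Sum.elim_comp_inl, logCoord_expCoord, Sum.elim_inr]
  rw [← mul_apply_eq_comp, Ring.inverse_mul_cancel_right _ _ hV]

lemma relativeAmplitude_zero_right {x : Fin 2 → ℝ} (hV : IsUnit (V (logCoord x) 0)) :
    relativeAmplitude V (Sum.elim x 0) = 1 := by
  simp [relativeAmplitude, Ring.mul_inverse_cancel _ hV]

/-- The function `h` is supported in the closed unit disc that lies below the first axis and touches
it at the origin, and its integrals with the slope-dependent weight `V` vanish along the lines of
slope and height less than `δ`, which are those close to the first axis. -/
structure VanishesOnNearTangents (V : ℝ × ℝ → ℝ → F →L[ℝ] F) (h : ℝ × ℝ → F) (δ : ℝ) : Prop where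
  continuous_weight : Continuous (Function.uncurry V)
  continuous : Continuous h
  mem_disc : ∀ p, h p ≠ 0 → p.1 ^ 2 + (1 + p.2) ^ 2 ≤ 1
  integral_eq_zero : ∀ ξ y, |ξ| < δ → |y| < δ → ∫ x, V (x, ξ * x + y) ξ (h (x, ξ * x + y)) = 0

namespace VanishesOnNearTangents

variable (H : VanishesOnNearTangents V h δ₀)
include H

lemma abs_fst_le {p : ℝ × ℝ} (hp : h p ≠ 0) : |p.1| ≤ 1 :=
  abs_le_one_iff_mul_self_le_one.2 (by nlinarith [H.mem_disc p hp, sq_nonneg (1 + p.2)])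

lemma snd_nonpos {p : ℝ × ℝ} (hp : h p ≠ 0) : p.2 ≤ 0 := by
  nlinarith [H.mem_disc p hp, sq_nonneg p.1]

lemma hasCompactSupport : HasCompactSupport h := by
  refine .of_support_subset_isCompact (isCompact_closedBall 0 2) fun p hp ↦ ?_
  have hdisc := H.mem_disc p hp
  rw [mem_closedBall_zero_iff, Prod.norm_def, Real.norm_eq_abs, Real.norm_eq_abs]
  refine max_le ((H.abs_fst_le hp).trans one_le_two) (abs_le.2 ⟨?_, ?_⟩) <;>
    nlinarith [sq_nonneg p.1]

lemma continuous_apply (ξ : ℝ) : Continuous fun p ↦ V p ξ (h p) :=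
  (H.continuous_weight.comp (by fun_prop : Continuous fun p ↦ (p, ξ))).clm_apply H.continuous

lemma hasCompactSupport_apply (ξ : ℝ) : HasCompactSupport fun p ↦ V p ξ (h p) :=
  H.hasCompactSupport.mono fun p hp h0 ↦ hp (by simp [h0])

lemma integral_eq_zero_of_neg_le {ξ y : ℝ} (hδ : δ < δ₀) (hξ : |ξ| ≤ δ / 2) (hy : -δ ≤ y) :
    ∫ x, V (x, ξ * x + y) ξ (h (x, ξ * x + y)) = 0 := by
  have hδ0 : 0 ≤ δ := by linarith [abs_nonneg ξ]
  rcases lt_or_ge y δ₀ with hy' | hy'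
  · exact H.integral_eq_zero ξ y (by linarith) (abs_lt.2 ⟨by linarith, hy'⟩)
  · have hzero (x : ℝ) : h (x, ξ * x + y) = 0 := by
      by_contra hne
      have hx : |ξ * x| ≤ δ / 2 := by
        rw [abs_mul]
        exact (mul_le_of_le_one_right (abs_nonneg ξ) (H.abs_fst_le hne)).trans hξ
      have := H.snd_nonpos hne
      linarith [(abs_le.1 hx).1]
    simp [hzero]

lemma exists_integral_norm_le : ∃ B, ∀ ξ, |ξ| ≤ 1 → ∫ p, ‖V p ξ (h p)‖ ≤ B := by
  have hcont : Continuous fun ξ ↦ ∫ p in tsupport h, ‖V p ξ (h p)‖ := by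
    refine continuous_parametric_integral_of_continuous ?_ H.hasCompactSupport
    exact ((H.continuous_weight.comp continuous_swap).clm_apply
      (H.continuous.comp continuous_snd)).norm
  obtain ⟨B, hB⟩ := (isCompact_Icc (a := -1) (b := 1)).exists_bound_of_continuousOn
    hcont.continuousOn
  refine ⟨B, fun ξ hξ ↦ ?_⟩
  rw [← setIntegral_eq_integral_of_forall_compl_eq_zero (s := tsupport h) fun p hp ↦ by
    simp [image_eq_zero_of_notMem_tsupport hp]]
  exact (le_abs_self _).trans (hB ξ (abs_le.1 hξ))

end VanishesOnNearTangents

/-- The restriction of `p ↦ V p 0 (h p)` to the half-plane `-δ ≤ p.2`, tilted by `exp (m * p.2)` so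
that for large `m` it concentrates at the top of the support of `h`. -/
noncomputable def tiltedCutoff (V : ℝ × ℝ → ℝ → F →L[ℝ] F) (h : ℝ × ℝ → F) (δ m : ℝ) : ℝ × ℝ → F :=
  {p : ℝ × ℝ | -δ ≤ p.2}.indicator fun p ↦ Real.exp (m * p.2) • V p 0 (h p)

lemma ne_zero_of_tiltedCutoff_ne_zero {p : ℝ × ℝ} (hp : tiltedCutoff V h δ m p ≠ 0) :
    -δ ≤ p.2 ∧ h p ≠ 0 := by
  obtain ⟨hmem, hne⟩ := Set.indicator_apply_ne_zero.1 hp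
  exact ⟨hmem, fun h0 ↦ hne (by simp [h0])⟩

lemma multiPow_one_add_mul_exp (hm : 0 < m) (i : Fin 2 → ℕ) (p : ℝ × ℝ) :
    multiPow (1 + expCoord p) i * Real.exp (m * p.2) =
      Real.exp ((m + i 1) * (p.2 - -i 0 / (m + i 1) * p.1)) := by
  have : m + i 1 ≠ 0 := by positivity
  rw [multiPow_one_add_expCoord, ← Real.exp_add]
  congr 1
  field_simp
  ring

lemma relativeAmplitude_apply_tiltedCutoff (hV : ∀ p, -δ ≤ p.2 → h p ≠ 0 → IsUnit (V p 0))
    (hm : 0 < m) (i : Fin 2 → ℕ) (p : ℝ × ℝ) :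
    relativeAmplitude V (Sum.elim (expCoord p) fun j ↦ i j / m)
        (multiPow (1 + expCoord p) i • tiltedCutoff V h δ m p) =
      {p : ℝ × ℝ | -δ ≤ p.2}.indicator (fun p ↦
        Real.exp ((m + i 1) * (p.2 - -i 0 / (m + i 1) * p.1)) •
          V p (-i 0 / (m + i 1)) (h p)) p := by
  by_cases hp : -δ ≤ p.2
  swap
  · simp [tiltedCutoff, hp]
  rcases eq_or_ne (h p) 0 with h0 | h0
  · simp [tiltedCutoff, h0, Set.indicator]
  have hslope : -(i 0 / m) / (1 + i 1 / m) = -i 0 / (m + i 1 : ℝ) := by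
    have : m + i 1 ≠ 0 := by positivity
    field_simp
  rw [tiltedCutoff, Set.indicator_of_mem (by exact hp), Set.indicator_of_mem (by exact hp),
    smul_smul, map_smul, relativeAmplitude_expCoord_apply (hV p hp h0), hslope,
    multiPow_one_add_mul_exp hm]

/-- The cutoff height `δ` and the exponential rate `M` are adapted to a monomial expansion of radius
`r` and majorant sum `C`, and to line integrals that vanish up to slope and height `δ₀`. -/
structure AdaptedScales (r C δ₀ δ M : ℝ) : Prop where
  height_lt : δ < δ₀
  rate_pos : 0 < M
  ratio_le : (1 + 1 / r) / M ≤ r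
  ratio_mul_le : (1 + 1 / r) / M * C ≤ r / 2
  inv_le : 1 / M ≤ δ / 2
  exp_le : (2 / r) ^ 2 * Real.exp (-(M * (δ / 2))) ≤ 1 / 2
  abs_expCoord_le : ∀ p : ℝ × ℝ, p.1 ^ 2 + (1 + p.2) ^ 2 ≤ 1 → -δ ≤ p.2 →
    ∀ j, |expCoord p j| ≤ r / 2

lemma exists_height_abs_expCoord_le (hr : 0 < r) (hδ₀ : 0 < δ₀) :
    ∃ δ, 0 < δ ∧ δ < δ₀ ∧ ∀ p : ℝ × ℝ, p.1 ^ 2 + (1 + p.2) ^ 2 ≤ 1 → -δ ≤ p.2 →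
      ∀ j, |expCoord p j| ≤ r / 2 := by
  have hzero : expCoord 0 = 0 := by ext j; fin_cases j <;> simp [expCoord]
  have hnear : ∀ᶠ p in 𝓝 (0 : ℝ × ℝ), ‖expCoord p‖ < r / 2 :=
    continuous_expCoord.norm.continuousAt.eventually_lt_const (by simpa [hzero] using hr)
  obtain ⟨s, hs, hball⟩ := Metric.eventually_nhds_iff.1 hnear
  obtain ⟨δ, hδ, hδlt⟩ := exists_between (lt_min hδ₀ (lt_min hs (by positivity : 0 < s ^ 2 / 2)))
  obtain ⟨hδ₀lt, hδs, hδsq⟩ := by simpa only [lt_min_iff] using hδlt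
  refine ⟨δ, hδ, hδ₀lt, fun p hdisc hp j ↦ ?_⟩
  refine (norm_le_pi_norm (expCoord p) j).trans (hball ?_).le
  have hfst : p.1 ^ 2 < s ^ 2 := by nlinarith [sq_nonneg p.2]
  rw [dist_zero_right, Prod.norm_def, max_lt_iff, Real.norm_eq_abs, Real.norm_eq_abs]
  exact ⟨abs_lt_of_sq_lt_sq hfst hs.le, abs_lt.2 ⟨by linarith, by nlinarith [sq_nonneg p.1]⟩⟩

lemma exists_adaptedScales (C : ℝ) (hr : 0 < r) (hδ₀ : 0 < δ₀) :
    ∃ δ M, AdaptedScales r C δ₀ δ M := by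
  obtain ⟨δ, hδ, hlt, hsmall⟩ := exists_height_abs_expCoord_le hr hδ₀
  have hinv : Tendsto (fun M : ℝ ↦ M⁻¹) atTop (𝓝 0) := tendsto_inv_atTop_zero
  have hratio : Tendsto (fun M : ℝ ↦ (1 + 1 / r) / M) atTop (𝓝 0) :=
    tendsto_const_nhds.div_atTop tendsto_id
  have hexp : Tendsto (fun M : ℝ ↦ (2 / r) ^ 2 * Real.exp (-(M * (δ / 2)))) atTop (𝓝 0) := by
    simpa using (Real.tendsto_exp_neg_atTop_nhds_zero.comp
      (tendsto_id.atTop_mul_const (half_pos hδ))).const_mul ((2 / r) ^ 2)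
  have hratioC : Tendsto (fun M : ℝ ↦ (1 + 1 / r) / M * C) atTop (𝓝 0) := by
    simpa using hratio.mul_const C
  obtain ⟨M, hM, h₁, h₂, h₃, h₄⟩ := ((eventually_gt_atTop 0).and <|
    (hratio.eventually_le_const hr).and <| (hratioC.eventually_le_const (half_pos hr)).and <|
    (hinv.eventually_le_const (half_pos hδ)).and (hexp.eventually_le_const one_half_pos)).exists
  exact ⟨δ, M, hlt, hM, h₁, h₂, by rwa [one_div], h₄, hsmall⟩

namespace VanishesOnNearTangents

variable (H : VanishesOnNearTangents V h δ₀) (A : AdaptedScales r C δ₀ δ M)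
include H

lemma integrable_tiltedCutoff (δ m : ℝ) : Integrable (tiltedCutoff V h δ m) := by
  refine Integrable.indicator ?_ (measurableSet_le measurable_const measurable_snd)
  refine Continuous.integrable_of_hasCompactSupport ?_ (H.hasCompactSupport_apply 0).smul_left
  exact (by fun_prop : Continuous fun p : ℝ × ℝ ↦ Real.exp (m * p.2)).smul (H.continuous_apply 0)

lemma integral_norm_tiltedCutoff_le (hm : 0 ≤ m) :
    ∫ p, ‖tiltedCutoff V h δ m p‖ ≤ ∫ p, ‖V p 0 (h p)‖ := by
  refine integral_mono (H.integrable_tiltedCutoff δ m).norm ((H.continuous_apply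
    0).integrable_of_hasCompactSupport (H.hasCompactSupport_apply 0)).norm fun p ↦ ?_
  refine (norm_indicator_le_norm_self _ _).trans ?_
  simpa using norm_smul_le_of_abs_le (B := 1) (x := V p 0 (h p)) fun hne ↦ by
    rw [Real.abs_exp, Real.exp_le_one_iff]
    exact mul_nonpos_of_nonneg_of_nonpos hm (H.snd_nonpos fun h0 ↦ hne (by simp [h0]))

include A

lemma abs_expCoord_le_of_tiltedCutoff_ne_zero {p : ℝ × ℝ} (hp : tiltedCutoff V h δ m p ≠ 0) :
    ∀ j, |expCoord p j| ≤ r / 2 :=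
  have ⟨hδ, hne⟩ := ne_zero_of_tiltedCutoff_ne_zero hp
  A.abs_expCoord_le p (H.mem_disc p hne) hδ

lemma isUnit_weight_of_mem (hr : 0 < r) (hV : ∀ x, (∀ j, |x j| ≤ r) → IsUnit (V (logCoord x) 0))
    (p : ℝ × ℝ) (hp : -δ ≤ p.2) (hne : h p ≠ 0) : IsUnit (V p 0) := by
  rw [← logCoord_expCoord p]
  exact hV _ fun j ↦ (A.abs_expCoord_le p (H.mem_disc p hne) hp j).trans (by linarith)

lemma norm_integral_relativeAmplitude_le {B : ℝ} (hr : 0 < r) (hr1 : r ≤ 1)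
    (hV : ∀ x, (∀ j, |x j| ≤ r) → IsUnit (V (logCoord x) 0))
    (hB : ∀ ξ, |ξ| ≤ 1 → ∫ p, ‖V p ξ (h p)‖ ≤ B) {K : ℕ} (hK : 1 ≤ K) {i : Fin 2 → ℕ}
    (hi : ∀ j, i j ≤ K) :
    ‖∫ p, relativeAmplitude V (Sum.elim (expCoord p) fun j ↦ i j / (K * M))
        (multiPow (1 + expCoord p) i • tiltedCutoff V h δ (K * M) p)‖ ≤
      Real.exp (-(M * (δ / 2))) ^ K * B := by
  have hM := A.rate_pos
  have hKM : 0 < K * M := by positivity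
  have hi0 : (i 0 : ℝ) ≤ K := by exact_mod_cast hi 0
  set ξ : ℝ := -i 0 / (K * M + i 1) with hξ
  have hξM : |ξ| ≤ 1 / M := by
    rw [hξ, abs_div, abs_neg, Nat.abs_cast, abs_of_pos (by positivity),
      div_le_div_iff₀ (by positivity) hM]
    nlinarith [(i 1).cast_nonneg (α := ℝ)]
  have hM1 : 1 / M ≤ 1 := by
    refine le_trans ?_ (A.ratio_le.trans hr1)
    gcongr
    linarith [one_div_pos.2 hr]
  have hξδ : |ξ| ≤ δ / 2 := hξM.trans A.inv_le
  have hδ : 0 ≤ δ / 2 := (abs_nonneg ξ).trans hξδ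
  simp only [relativeAmplitude_apply_tiltedCutoff (H.isUnit_weight_of_mem A hr hV) hKM i]
  rw [integral_indicator (measurableSet_le measurable_const measurable_snd)]
  calc _ ≤ Real.exp (-((K * M + i 1) * (δ / 2))) * ∫ p, ‖V p ξ (h p)‖ :=
        norm_setIntegral_exp_smul_le (H.continuous_apply ξ) (H.hasCompactSupport_apply ξ)
          (fun p hp ↦ H.abs_fst_le fun h0 ↦ hp (by simp [h0])) hξδ (by positivity)
          fun y hy ↦ H.integral_eq_zero_of_neg_le A.height_lt hξδ hy
    _ ≤ Real.exp (K * -(M * (δ / 2))) * B := by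
        gcongr
        · nlinarith [mul_nonneg (i 1).cast_nonneg hδ]
        · exact hB ξ (hξM.trans hM1)
    _ = Real.exp (-(M * (δ / 2))) ^ K * B := by rw [Real.exp_nat_mul]

lemma exists_norm_vectorMoment_tiltedCutoff_le [Countable ι] [CompleteSpace F]
    (hr : 0 < r) (hr1 : r ≤ 1) (hV : ∀ x, (∀ j, |x j| ≤ r) → IsUnit (V (logCoord x) 0))
    (hG : HasMonomialExpansion e u r C (relativeAmplitude V)) :
    ∃ B, ∀ K : ℕ, 1 ≤ K → ∀ α,
      ‖vectorMoment volume expCoord (tiltedCutoff V h δ (K * M)) α‖ ≤ B * (1 / 2) ^ K := by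
  obtain ⟨B, hB⟩ := H.exists_integral_norm_le
  have hB0 : 0 ≤ B := (integral_nonneg fun p ↦ norm_nonneg _).trans (hB 0 (by simp))
  have hM := A.rate_pos
  refine ⟨2 * B, fun K hK α ↦ ?_⟩
  have hKM : 0 < K * M := by positivity
  have hratio : K * (1 + 1 / r) / (K * M) = (1 + 1 / r) / M :=
    mul_div_mul_left _ _ (by positivity)
  have hmax := hG.norm_vectorMoment_le_max
    (fun x hx ↦ relativeAmplitude_zero_right (hV x hx)) continuous_expCoord.measurable
    (H.integrable_tiltedCutoff δ (K * M)) hr hr1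
    (fun p hp ↦ H.abs_expCoord_le_of_tiltedCutoff_ne_zero A hp) hKM
    (hratio.trans_le A.ratio_le) (hratio.symm ▸ A.ratio_mul_le)
    (fun i hi ↦ H.norm_integral_relativeAmplitude_le A hr hr1 hV hB hK hi) α
  have hsmall : (2 / r) ^ (2 * K) * (Real.exp (-(M * (δ / 2))) ^ K * B) ≤ (1 / 2) ^ K * B := by
    rw [pow_mul, ← mul_assoc, ← mul_pow]
    gcongr
    exact A.exp_le
  have hnorm : ∫ p, ‖tiltedCutoff V h δ (K * M) p‖ ≤ B :=
    (H.integral_norm_tiltedCutoff_le hKM.le).trans (hB 0 (by simp))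
  have hhalf : 0 ≤ (1 / 2 : ℝ) ^ K * B := by positivity
  calc _ ≤ max (2 * ((1 / 2) ^ K * B)) ((1 / 2) ^ K * B) * 1 := by
        refine hmax.trans ?_
        rw [Fintype.card_fin]
        gcongr
        exact pow_le_one₀ hr.le hr1
    _ = 2 * B * (1 / 2) ^ K := by
        rw [max_eq_left (by linarith)]
        ring

lemma vectorMoment_indicator_eq_zero [Countable ι] [CompleteSpace F]
    (hr : 0 < r) (hr1 : r ≤ 1) (hV : ∀ x, (∀ j, |x j| ≤ r) → IsUnit (V (logCoord x) 0))
    (hG : HasMonomialExpansion e u r C (relativeAmplitude V)) {ε : ℝ} (hεδ : ε ≤ δ)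
    (hεM : M * ε < Real.log 2) (α : Fin 2 → ℕ) :
    vectorMoment volume expCoord
      ({p : ℝ × ℝ | -ε ≤ p.2}.indicator fun p ↦ V p 0 (h p)) α = 0 := by
  obtain ⟨B, hB⟩ := H.exists_norm_vectorMoment_tiltedCutoff_le A hr hr1 hV hG
  have hM := A.rate_pos
  set φ : ℝ × ℝ → F := fun p ↦ multiPow (expCoord p) α • tiltedCutoff V h δ 0 p with hφ
  have hφi : Integrable φ :=
    integrable_multiPow_smul continuous_expCoord.measurable (H.integrable_tiltedCutoff δ 0)
      (fun p hp ↦ H.abs_expCoord_le_of_tiltedCutoff_ne_zero A hp) α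
  have hvanish : ∫ p in {p : ℝ × ℝ | -(M * ε) ≤ M * p.2}, φ p = 0 := by
    refine setIntegral_eq_zero_of_norm_integral_exp_le (B := 0) (C := B) (ε := Real.log 2) hφi
      (by fun_prop) (fun p hp ↦ ?_) (fun K hK ↦ ?_) (by linarith)
    · have hne := (ne_zero_of_tiltedCutoff_ne_zero (right_ne_zero_of_smul hp)).2
      exact mul_nonpos_of_nonneg_of_nonpos hM.le (H.snd_nonpos hne)
    · have hrate : Real.exp (-(K * Real.log 2)) = (1 / 2) ^ K := by
        rw [← mul_neg, Real.exp_nat_mul, Real.exp_neg, Real.exp_log two_pos, one_div]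
      rw [hrate]
      convert hB K hK α using 2
      refine integral_congr_ae (.of_forall fun p ↦ ?_)
      simp only [hφ, tiltedCutoff, Set.indicator_apply, zero_mul, Real.exp_zero, one_smul]
      split_ifs
      · rw [smul_comm, mul_assoc]
      · simp
  rw [← hvanish, ← integral_indicator (measurableSet_le measurable_const (by fun_prop))]
  refine integral_congr_ae (.of_forall fun p ↦ ?_)
  have hiff : -(M * ε) ≤ M * p.2 ↔ -ε ≤ p.2 := by rw [← mul_neg, mul_le_mul_iff_right₀ hM]
  by_cases hp : -ε ≤ p.2
  · simp [hφ, tiltedCutoff, Set.indicator_apply, hiff, hp, (neg_le_neg hεδ).trans hp]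
  · simp [hiff, hp]

end VanishesOnNearTangents

theorem exists_forall_vanishesOnNearTangents_eq_zero [Countable ι] [CompleteSpace F]
    (C : ℝ) (hr : 0 < r) (hr1 : r ≤ 1) (hδ₀ : 0 < δ₀) :
    ∃ ε > 0, ∀ (V : ℝ × ℝ → ℝ → F →L[ℝ] F) (h : ℝ × ℝ → F) (u : ι → F →L[ℝ] F),
      VanishesOnNearTangents V h δ₀ → (∀ x, (∀ j, |x j| ≤ r) → IsUnit (V (logCoord x) 0)) →
      HasMonomialExpansion e u r C (relativeAmplitude V) → ∀ p : ℝ × ℝ, -ε < p.2 → h p = 0 := by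
  obtain ⟨δ, M, A⟩ := exists_adaptedScales C hr hδ₀
  have hM := A.rate_pos
  have hδ : 0 < δ := by linarith [one_div_pos.2 hM, A.inv_le]
  obtain ⟨ε, hε, hlt⟩ := exists_between (lt_min hδ (div_pos (Real.log_pos one_lt_two) hM))
  obtain ⟨hεδ, hεM⟩ := lt_min_iff.1 hlt
  refine ⟨ε, hε, fun V h u H hV hG p hp ↦ ?_⟩
  by_contra hne
  refine hne ?_
  have hVh : V p 0 (h p) = 0 := by
    refine eqOn_interior_of_forall_vectorMoment_eq_zero continuous_expCoord injective_expCoord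
      (measurableSet_le measurable_const measurable_snd) (H.continuous_apply 0)
      (H.hasCompactSupport_apply 0) (H.vectorMoment_indicator_eq_zero A hr hr1 hV hG hεδ.le
        (by rwa [mul_comm, ← lt_div_iff₀ hM])) ?_
    exact (isOpen_lt continuous_const continuous_snd).subset_interior_iff.2
      (fun q hq ↦ le_of_lt hq) hp
  obtain ⟨L, hL⟩ := H.isUnit_weight_of_mem A hr hV p (by linarith) hne
  have hinv : (↑L⁻¹ : F →L[ℝ] F) (V p 0 (h p)) = h p := by
    rw [← hL, ← mul_apply_eq_comp, Units.inv_mul, one_apply_eq_self]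
  rw [← hinv, hVh, map_zero]

end PlanarTheorem

section TangentialSlices

open scoped ContDiff

variable {E F : Type*} [NormedAddCommGroup E] [InnerProductSpace ℝ E]
  [NormedAddCommGroup F] [NormedSpace ℝ F]

/-- The point orthogonal to the unit vector `v` on the line through `q` with direction `v`. -/
def footPoint (v q : E) : E :=
  q - ⟪q, v⟫ • v

lemma inner_footPoint {v : E} (hv : ‖v‖ = 1) (q : E) : ⟪footPoint v q, v⟫ = 0 := by
  simp [footPoint, inner_sub_left, real_inner_smul_left, hv]

lemma footPoint_add_smul {v : E} (hv : ‖v‖ = 1) (q : E) (t : ℝ) :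
    footPoint v (q + t • v) = footPoint v q := by
  simp only [footPoint, inner_add_left, real_inner_smul_left, real_inner_self_eq_norm_sq, hv]
  module

lemma integral_add_mul_smul_eq (Φ : E → F) (v q : E) (s : ℝ) :
    ∫ x : ℝ, Φ (q + (s * x) • v) = |s⁻¹| • ∫ t : ℝ, Φ (footPoint v q + t • v) := by
  have hfoot (t : ℝ) : q + t • v = footPoint v q + (t + ⟪q, v⟫) • v := by
    simp only [footPoint]
    module
  simp only [hfoot]
  rw [Measure.integral_comp_mul_left fun t ↦ Φ (footPoint v q + (t + ⟪q, v⟫) • v),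
    integral_add_right_eq_self fun t : ℝ ↦ Φ (footPoint v q + t • v)]

/-- The unit vector of slope `ξ` in the plane with abscissa `v₀` and ordinate `x₀`. -/
noncomputable def unitDir (x₀ v₀ : E) (ξ : ℝ) : E :=
  (√(1 + ξ ^ 2))⁻¹ • (v₀ + ξ • x₀)

/-- The affine chart, centred at `x₀ + w`, of the plane through `x₀ + w` spanned by `v₀` and
`x₀`. -/
def sliceChart (x₀ v₀ w : E) (p : ℝ × ℝ) : E :=
  p.1 • v₀ + (1 + p.2) • x₀ + w

/-- The line of slope `ξ` through the point with coordinates `p` of the slice at `x₀ + w`, given by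
its foot point and direction, together with that point. -/
noncomputable def sliceLine (x₀ v₀ : E) (q : E × (ℝ × ℝ) × ℝ) : E × E × E :=
  (footPoint (unitDir x₀ v₀ q.2.2) (sliceChart x₀ v₀ q.1 q.2.1), unitDir x₀ v₀ q.2.2,
    sliceChart x₀ v₀ q.1 q.2.1)

/-- The weight `W` on the slice at `x₀ + w`, as a function of the point and of the slope. -/
noncomputable def sliceWeight (x₀ v₀ : E) (W : E × E × E → F →L[ℝ] F) (w : E) (p : ℝ × ℝ) (ξ : ℝ) :
    F →L[ℝ] F :=
  W (sliceLine x₀ v₀ (w, p, ξ))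

/-- The X-ray transform of `f` with weight `W` along the line with foot point `p` and direction `v`,
the weight acting on the values of `f`. -/
noncomputable def weightedXRay (W : E × E × E → F →L[ℝ] F) (f : E → F) (p v : E) : F :=
  ∫ t : ℝ, W (p, v, p + t • v) (f (p + t • v))

variable {x₀ v₀ : E}

lemma norm_unitDir (hx₀ : ‖x₀‖ = 1) (hv₀ : ‖v₀‖ = 1) (horth : ⟪x₀, v₀⟫ = 0) (ξ : ℝ) :
    ‖unitDir x₀ v₀ ξ‖ = 1 := by
  have hsq : ‖v₀ + ξ • x₀‖ ^ 2 = 1 + ξ ^ 2 := by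
    rw [norm_add_sq_real, real_inner_smul_right, real_inner_comm, horth, norm_smul, mul_pow, hx₀,
      hv₀, Real.norm_eq_abs, sq_abs]
    ring
  have hnorm : ‖v₀ + ξ • x₀‖ = √(1 + ξ ^ 2) := by rw [← hsq, Real.sqrt_sq (norm_nonneg _)]
  rw [unitDir, norm_smul, norm_inv, Real.norm_of_nonneg (Real.sqrt_nonneg _), hnorm,
    inv_mul_cancel₀ (by positivity)]

lemma norm_sliceChart_sq (hx₀ : ‖x₀‖ = 1) (hv₀ : ‖v₀‖ = 1) (horth : ⟪x₀, v₀⟫ = 0) {w : E}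
    (hwx : ⟪w, x₀⟫ = 0) (hwv : ⟪w, v₀⟫ = 0) (p : ℝ × ℝ) :
    ‖sliceChart x₀ v₀ w p‖ ^ 2 = p.1 ^ 2 + (1 + p.2) ^ 2 + ‖w‖ ^ 2 := by
  rw [real_inner_comm] at hwx hwv horth
  simp only [sliceChart, norm_add_sq_real, inner_add_left, real_inner_smul_left,
    real_inner_smul_right, hwx, hwv, horth, norm_smul, mul_pow, hx₀, hv₀, Real.norm_eq_abs, sq_abs]
  ring

lemma sliceChart_line (w : E) (ξ x y : ℝ) :
    sliceChart x₀ v₀ w (x, ξ * x + y) =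
      sliceChart x₀ v₀ w (0, y) + (√(1 + ξ ^ 2) * x) • unitDir x₀ v₀ ξ := by
  have hne : √(1 + ξ ^ 2) ≠ 0 := by positivity
  rw [unitDir, smul_smul, mul_right_comm, mul_inv_cancel₀ hne, one_mul]
  simp only [sliceChart]
  module

lemma exists_sliceChart_eq (hx₀ : ‖x₀‖ = 1) (hv₀ : ‖v₀‖ = 1) (horth : ⟪x₀, v₀⟫ = 0) (x : E) :
    ∃ w p, sliceChart x₀ v₀ w p = x ∧ ⟪w, x₀⟫ = 0 ∧ ⟪w, v₀⟫ = 0 ∧ ‖w‖ ≤ ‖x - x₀‖ ∧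
      |p.2| ≤ ‖x - x₀‖ := by
  set a := ⟪x - x₀, v₀⟫
  set b := ⟪x - x₀, x₀⟫
  set w := x - x₀ - a • v₀ - b • x₀ with hw
  have horth' : ⟪v₀, x₀⟫ = 0 := by rwa [real_inner_comm]
  have hwx : ⟪w, x₀⟫ = 0 := by
    simp [hw, inner_sub_left, real_inner_smul_left, horth', hx₀, b]
  have hwv : ⟪w, v₀⟫ = 0 := by
    simp [hw, inner_sub_left, real_inner_smul_left, horth, hv₀, a]
  refine ⟨w, (a, b), ?_, hwx, hwv, ?_, ?_⟩
  · simp only [sliceChart, hw]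
    module
  · have hdecomp : x - x₀ = w + (a • v₀ + b • x₀) := by
      rw [hw]
      abel
    have hperp : ⟪w, a • v₀ + b • x₀⟫ = 0 := by
      simp [inner_add_right, real_inner_smul_right, hwx, hwv]
    rw [hdecomp]
    rw [← sq_le_sq₀ (norm_nonneg _) (norm_nonneg _), norm_add_sq_real, hperp]
    nlinarith [sq_nonneg ‖a • v₀ + b • x₀‖]
  · simpa [hx₀] using abs_real_inner_le_norm (x - x₀) x₀

lemma contDiff_unitDir (x₀ v₀ : E) : ContDiff ℝ ω (unitDir x₀ v₀) := by
  have hpos (ξ : ℝ) : 0 < 1 + ξ ^ 2 := by positivity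
  have hsqrt : ContDiff ℝ ω fun ξ : ℝ ↦ (√(1 + ξ ^ 2))⁻¹ :=
    (ContDiff.sqrt (by fun_prop) fun ξ ↦ (hpos ξ).ne').inv fun ξ ↦ (Real.sqrt_pos.2 (hpos ξ)).ne'
  exact hsqrt.smul (by fun_prop)

@[simp]
lemma unitDir_zero (x₀ v₀ : E) : unitDir x₀ v₀ 0 = v₀ := by
  simp [unitDir]

@[simp]
lemma sliceChart_zero (x₀ v₀ : E) : sliceChart x₀ v₀ 0 0 = x₀ := by
  simp [sliceChart]

lemma contDiff_sliceLine (x₀ v₀ : E) : ContDiff ℝ ω (sliceLine x₀ v₀) := by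
  have hdir : ContDiff ℝ ω fun q : E × (ℝ × ℝ) × ℝ ↦ unitDir x₀ v₀ q.2.2 :=
    (contDiff_unitDir x₀ v₀).comp (by fun_prop)
  have hchart : ContDiff ℝ ω fun q : E × (ℝ × ℝ) × ℝ ↦ sliceChart x₀ v₀ q.1 q.2.1 := by
    unfold sliceChart
    fun_prop
  exact (hchart.sub ((hchart.inner ℝ hdir).smul hdir)).prodMk (hdir.prodMk hchart)

lemma sliceLine_zero (horth : ⟪x₀, v₀⟫ = 0) : sliceLine x₀ v₀ 0 = (x₀, v₀, x₀) := by
  simp [sliceLine, footPoint, horth]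

variable {W : E × E × E → F →L[ℝ] F} {f : E → F}

lemma integral_sliceWeight_eq (hx₀ : ‖x₀‖ = 1) (hv₀ : ‖v₀‖ = 1) (horth : ⟪x₀, v₀⟫ = 0) (w : E)
    (ξ y : ℝ) :
    ∫ x, sliceWeight x₀ v₀ W w (x, ξ * x + y) ξ (f (sliceChart x₀ v₀ w (x, ξ * x + y))) =
      |(√(1 + ξ ^ 2))⁻¹| • weightedXRay W f
        (footPoint (unitDir x₀ v₀ ξ) (sliceChart x₀ v₀ w (0, y))) (unitDir x₀ v₀ ξ) := by
  simp only [sliceWeight, sliceLine, sliceChart_line w ξ _ y,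
    footPoint_add_smul (norm_unitDir hx₀ hv₀ horth ξ)]
  exact integral_add_mul_smul_eq (fun z ↦ W (footPoint (unitDir x₀ v₀ ξ)
    (sliceChart x₀ v₀ w (0, y)), unitDir x₀ v₀ ξ, z) (f z)) _ _ _

lemma exists_weightedXRay_slice_eq_zero (hx₀ : ‖x₀‖ = 1) (hv₀ : ‖v₀‖ = 1) (horth : ⟪x₀, v₀⟫ = 0)
    (hint : ∃ δ > 0, ∀ v, ‖v‖ = 1 → ‖v - v₀‖ < δ → ∀ p, ⟪p, v⟫ = 0 → ‖p - x₀‖ < δ →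
      weightedXRay W f p v = 0) :
    ∃ δ₀ > 0, ∀ w ξ y, ‖w‖ < δ₀ → |ξ| < δ₀ → |y| < δ₀ →
      weightedXRay W f (footPoint (unitDir x₀ v₀ ξ) (sliceChart x₀ v₀ w (0, y)))
        (unitDir x₀ v₀ ξ) = 0 := by
  obtain ⟨δ, hδ, hzero⟩ := hint
  have hnear : ∀ᶠ q in 𝓝 0, dist (sliceLine x₀ v₀ q) (x₀, v₀, x₀) < δ := by
    rw [← sliceLine_zero horth]
    exact (contDiff_sliceLine x₀ v₀).continuous.continuousAt.eventually (Metric.ball_mem_nhds _ hδ)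
  obtain ⟨δ₀, hδ₀, hball⟩ := Metric.eventually_nhds_iff.1 hnear
  refine ⟨δ₀, hδ₀, fun w ξ y hw hξ hy ↦ ?_⟩
  have hdist : dist (sliceLine x₀ v₀ (w, (0, y), ξ)) (x₀, v₀, x₀) < δ :=
    hball (by simp [Prod.norm_def, hw, hξ, hy])
  rw [sliceLine, Prod.dist_eq, max_lt_iff, Prod.dist_eq, max_lt_iff] at hdist
  simp only [dist_eq_norm] at hdist
  have hunit := norm_unitDir hx₀ hv₀ horth ξ
  exact hzero _ hunit hdist.2.1 _ (inner_footPoint hunit _) hdist.1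

lemma vanishesOnNearTangents_slice (hx₀ : ‖x₀‖ = 1) (hv₀ : ‖v₀‖ = 1) (horth : ⟪x₀, v₀⟫ = 0)
    (hW : Continuous W) (hf : Continuous f) (hsupp : Function.support f ⊆ Metric.closedBall 0 1)
    {w : E} (hwx : ⟪w, x₀⟫ = 0) (hwv : ⟪w, v₀⟫ = 0) {δ₀ : ℝ}
    (hzero : ∀ ξ y, |ξ| < δ₀ → |y| < δ₀ →
      weightedXRay W f (footPoint (unitDir x₀ v₀ ξ) (sliceChart x₀ v₀ w (0, y)))
        (unitDir x₀ v₀ ξ) = 0) :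
    VanishesOnNearTangents (sliceWeight x₀ v₀ W w) (f ∘ sliceChart x₀ v₀ w) δ₀ where
  continuous_weight := hW.comp <| (contDiff_sliceLine x₀ v₀).continuous.comp
    (by fun_prop : Continuous fun q : (ℝ × ℝ) × ℝ ↦ (w, q.1, q.2))
  continuous := hf.comp (by unfold sliceChart; fun_prop)
  mem_disc p hp := by
    have hnorm : ‖sliceChart x₀ v₀ w p‖ ^ 2 ≤ 1 :=
      pow_le_one₀ (norm_nonneg _) (mem_closedBall_zero_iff.1 (hsupp hp))
    rw [norm_sliceChart_sq hx₀ hv₀ horth hwx hwv] at hnorm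
    linarith [sq_nonneg ‖w‖]
  integral_eq_zero ξ y hξ hy := by
    simp only [Function.comp_apply]
    rw [integral_sliceWeight_eq hx₀ hv₀ horth, hzero ξ y hξ hy, smul_zero]

variable [CompleteSpace F]

lemma contDiffAt_logCoord : ContDiffAt ℝ ω logCoord 0 := by
  have hlog (j : Fin 2) : ContDiffAt ℝ ω (fun x : Fin 2 → ℝ ↦ Real.log (1 + x j)) 0 :=
    ContDiffAt.log (by fun_prop) (by simp)
  exact (hlog 0).prodMk (hlog 1)

lemma analyticAt_relativeAmplitude_slice (horth : ⟪x₀, v₀⟫ = 0)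
    (hW : AnalyticAt ℝ W (x₀, v₀, x₀)) (hinv : IsUnit (W (x₀, v₀, x₀))) :
    AnalyticAt ℝ (fun q : (Fin 2 ⊕ Fin 2 → ℝ) × E ↦
      relativeAmplitude (sliceWeight x₀ v₀ W q.2) q.1) 0 := by
  have hlog0 : logCoord 0 = 0 := by simp [logCoord]
  have hlog : ContDiffAt ℝ ω (fun q : (Fin 2 ⊕ Fin 2 → ℝ) × E ↦ logCoord (q.1 ∘ Sum.inl)) 0 :=
    contDiffAt_logCoord.comp (f := fun q : (Fin 2 ⊕ Fin 2 → ℝ) × E ↦ q.1 ∘ Sum.inl) 0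
      (contDiff_pi.2 fun j ↦ by fun_prop).contDiffAt
  have hslope : ContDiffAt ℝ ω
      (fun q : (Fin 2 ⊕ Fin 2 → ℝ) × E ↦ -q.1 (.inr 0) / (1 + q.1 (.inr 1))) 0 :=
    ContDiffAt.div (by fun_prop) (by fun_prop) (by simp)
  have hweight {s : (Fin 2 ⊕ Fin 2 → ℝ) × E → ℝ} (hs : ContDiffAt ℝ ω s 0) (hs0 : s 0 = 0) :
      ContDiffAt ℝ ω (fun q ↦ sliceWeight x₀ v₀ W q.2 (logCoord (q.1 ∘ Sum.inl)) (s q)) 0 := by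
    refine ContDiffAt.comp (0 : (Fin 2 ⊕ Fin 2 → ℝ) × E) (g := W ∘ sliceLine x₀ v₀)
      (f := fun q ↦ (q.2, logCoord (q.1 ∘ Sum.inl), s q)) ?_
      (contDiffAt_snd.prodMk (hlog.prodMk hs))
    refine ContDiffAt.comp _ ?_ (contDiff_sliceLine x₀ v₀).contDiffAt
    simpa [hs0, hlog0, sliceLine_zero horth, ← Prod.zero_eq_mk] using hW.contDiffAt
  obtain ⟨L, hL⟩ := hinv
  have hinverse : ContDiffAt ℝ ω Ring.inverse (sliceWeight x₀ v₀ W 0 0 0) := by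
    rw [sliceWeight, ← Prod.zero_eq_mk, ← Prod.zero_eq_mk, sliceLine_zero horth, ← hL]
    exact contDiffAt_ringInverse ℝ L
  refine ContDiffAt.analyticAt ((hweight hslope (by simp)).mul ?_)
  refine ContDiffAt.comp (0 : (Fin 2 ⊕ Fin 2 → ℝ) × E) (g := Ring.inverse) ?_
    (hweight contDiffAt_const rfl)
  simpa [hlog0] using hinverse

lemma eventually_isUnit_sliceWeight (horth : ⟪x₀, v₀⟫ = 0) (hW : Continuous W)
    (hinv : IsUnit (W (x₀, v₀, x₀))) :
    ∀ᶠ q : (Fin 2 → ℝ) × E in 𝓝 0, IsUnit (sliceWeight x₀ v₀ W q.2 (logCoord q.1) 0) := by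
  have hcoord : ContinuousAt (fun q : (Fin 2 → ℝ) × E ↦ (q.2, logCoord q.1, (0 : ℝ))) 0 :=
    continuousAt_snd.prodMk
      ((contDiffAt_logCoord.continuousAt.comp_of_eq continuousAt_fst rfl).prodMk continuousAt_const)
  have hcont : ContinuousAt
      (fun q : (Fin 2 → ℝ) × E ↦ sliceWeight x₀ v₀ W q.2 (logCoord q.1) 0) 0 :=
    (hW.comp (contDiff_sliceLine x₀ v₀).continuous).continuousAt.comp hcoord
  refine hcont.eventually (Units.isOpen.mem_nhds ?_)
  simpa [sliceWeight, logCoord, ← Prod.zero_eq_mk, sliceLine_zero horth] using hinv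

lemma exists_slice_radius (horth : ⟪x₀, v₀⟫ = 0) (hWc : Continuous W)
    (hW : AnalyticAt ℝ W (x₀, v₀, x₀)) (hinv : IsUnit (W (x₀, v₀, x₀))) :
    ∃ r > 0, r ≤ 1 ∧ ∃ C, ∀ w, ‖w‖ ≤ r →
      (∀ x, (∀ j, |x j| ≤ r) → IsUnit (sliceWeight x₀ v₀ W w (logCoord x) 0)) ∧
      ∃ u : OptionWord (Fin 2 ⊕ Fin 2) → F →L[ℝ] F, HasMonomialExpansion OptionWord.letterCount u
        r C (relativeAmplitude (sliceWeight x₀ v₀ W w)) := by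
  obtain ⟨s, hs, C, hexp⟩ := exists_hasMonomialExpansion_of_analyticAt
    (analyticAt_relativeAmplitude_slice horth hW hinv)
  obtain ⟨ρ, hρ, hunit⟩ := Metric.nhds_basis_closedBall.eventually_iff.1
    (eventually_isUnit_sliceWeight horth hWc hinv)
  have hr : 0 < min s (min ρ 1) := by positivity
  refine ⟨min s (min ρ 1), hr, by simp, C, fun w hw ↦ ⟨fun x hx ↦ ?_, ?_⟩⟩
  · refine hunit (x := (x, w)) ?_
    rw [mem_closedBall_zero_iff, norm_prod_le_iff, pi_norm_le_iff_of_nonneg hρ.le]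
    have hle : min s (min ρ 1) ≤ ρ := (min_le_right _ _).trans (min_le_left _ _)
    exact ⟨fun j ↦ (hx j).trans hle, hw.trans hle⟩
  · obtain ⟨u, hu⟩ := hexp w (hw.trans (min_le_left _ _))
    exact ⟨u, hu.mono hr.le (min_le_left _ _)⟩

theorem matrix_weighted_xray_local_injective_ball_general (hx₀ : ‖x₀‖ = 1) (hv₀ : ‖v₀‖ = 1)
    (hx₀v₀ : ⟪x₀, v₀⟫ = 0) (hWcont : Continuous W) (hWanalytic : AnalyticAt ℝ W (x₀, v₀, x₀))
    (hWinv : IsUnit (W (x₀, v₀, x₀))) (hf : Continuous f)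
    (hsupp : Function.support f ⊆ Metric.closedBall 0 1)
    (hint : ∃ δ > 0, ∀ v, ‖v‖ = 1 → ‖v - v₀‖ < δ → ∀ p, ⟪p, v⟫ = 0 → ‖p - x₀‖ < δ →
      weightedXRay W f p v = 0) :
    ∃ ε > 0, ∀ x, ‖x - x₀‖ < ε → f x = 0 := by
  obtain ⟨r, hr, hr1, C, hslice⟩ := exists_slice_radius hx₀v₀ hWcont hWanalytic hWinv
  obtain ⟨δ₀, hδ₀, hzero⟩ := exists_weightedXRay_slice_eq_zero hx₀ hv₀ hx₀v₀ hint
  obtain ⟨ε, hε, hplanar⟩ := exists_forall_vanishesOnNearTangents_eq_zero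
    (F := F) (e := OptionWord.letterCount) C hr hr1 hδ₀
  refine ⟨min r (min δ₀ ε), by positivity, fun x hx ↦ ?_⟩
  obtain ⟨hxr, hxδ, hxε⟩ := by simpa only [lt_min_iff] using hx
  obtain ⟨w, p, rfl, hwx, hwv, hw, hp⟩ := exists_sliceChart_eq hx₀ hv₀ hx₀v₀ x
  obtain ⟨hunit, u, hu⟩ := hslice w (hw.trans hxr.le)
  exact hplanar _ _ u
    (vanishesOnNearTangents_slice hx₀ hv₀ hx₀v₀ hWcont hf hsupp hwx hwv
      fun ξ y ↦ hzero w ξ y (hw.trans_lt hxδ))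
    hunit hu p (neg_lt_of_abs_lt (hp.trans_lt hxε))

end TangentialSlices

/-- The `ℝ`-algebra homomorphism that sends a complex matrix to its action on column vectors, an
`ℝ`-linear operator. -/
noncomputable def mulVecCLM (ι : Type*) [Fintype ι] [DecidableEq ι] :
    Matrix ι ι ℂ →ₐ[ℝ] ((ι → ℂ) →L[ℝ] (ι → ℂ)) :=
  AlgHom.ofLinearMap
    { toFun := fun A ↦ LinearMap.toContinuousLinearMap (A.mulVecLin.restrictScalars ℝ)
      map_add' := fun A B ↦ by ext1 x; exact Matrix.add_mulVec A B x
      map_smul' := fun c A ↦ by ext1 x; exact Matrix.smul_mulVec c A x }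
    (by ext1 x; exact Matrix.one_mulVec x)
    (fun A B ↦ by ext1 x; exact (Matrix.mulVec_mulVec x A B).symm)

/-- Local injectivity of the matrix-weighted X-ray transform near a strictly convex
boundary point of the closed unit ball in ℝⁿ: if the weighted line integrals vanish for
all lines near the tangent line at the glancing direction `(x₀, v₀)`, then `f` vanishes
near `x₀`. -/
theorem matrix_weighted_xray_local_injective_ball
    (n N : ℕ) (hn : 2 ≤ n) (hN : 1 ≤ N)
    (x₀ v₀ : EuclideanSpace ℝ (Fin n))
    (hx₀ : ‖x₀‖ = 1) (hv₀ : ‖v₀‖ = 1) (hx₀v₀ : ⟪x₀, v₀⟫ = 0)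
    (W : EuclideanSpace ℝ (Fin n) × EuclideanSpace ℝ (Fin n) × EuclideanSpace ℝ (Fin n) →
      Matrix (Fin N) (Fin N) ℂ)
    (hWanalytic : AnalyticOnNhd ℝ W Set.univ)
    (hWinv : ∀ (p : EuclideanSpace ℝ (Fin n)) (v : EuclideanSpace ℝ (Fin n))
      (x : EuclideanSpace ℝ (Fin n)), ‖v‖ = 1 → IsUnit (W (p, v, x)))
    (f : EuclideanSpace ℝ (Fin n) → (Fin N → ℂ))
    (hf : Continuous f)
    (hsupp : Function.support f ⊆ Metric.closedBall (0 : EuclideanSpace ℝ (Fin n)) 1)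
    (hint : ∃ δ > (0 : ℝ), ∀ v : EuclideanSpace ℝ (Fin n), ‖v‖ = 1 → ‖v - v₀‖ < δ →
      ∀ p : EuclideanSpace ℝ (Fin n), ⟪p, v⟫ = 0 → ‖p - x₀‖ < δ →
        (∫ t : ℝ, W (p, v, p + t • v) *ᵥ f (p + t • v)) = 0) :
    ∃ ε > (0 : ℝ), ∀ x : EuclideanSpace ℝ (Fin n), ‖x - x₀‖ < ε → f x = 0 := by
  let T := (mulVecCLM (Fin N)).toLinearMap.toContinuousLinearMap
  exact matrix_weighted_xray_local_injective_ball_general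
    (W := fun q ↦ mulVecCLM (Fin N) (W q)) hx₀ hv₀ hx₀v₀ (T.continuous.comp hWanalytic.continuous)
    ((T.analyticAt _).comp (hWanalytic _ (Set.mem_univ _)))
    ((hWinv x₀ v₀ x₀ hv₀).map (mulVecCLM (Fin N))) hf hsupp hint
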